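/- arXiv:1903.02385 — 2 statements merged into one kernel-verified Lean document; each statement's English description precedes it below -/
import Mathlib

section
/- Let a ∈ (0, a₀) and let v, w : ℝ → ℝ be bounded C⁴ positive solutions of the ODE v''''(t) − A·v''(t) + B·v(t) = g(v(t)) with inf_{t ∈ ℝ} v(t) = inf_{t ∈ ℝ} w(t) = a. Then there exists τ ∈ ℝ such that w(t) = v(t + τ) for all t ∈ ℝ. -/
open Real Filter Set

noncomputable section

/-- Conditions (G) on the nonlinearity `g`, extended to `[0,∞)` by `g 0 = 0`. -/
def CondG (n : ℕ) (g : ℝ → ℝ) : Prop :=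
  ContDiffOn ℝ 1 g (Set.Ioi 0) ∧
  (∀ t > 0, 0 < g t) ∧
  Filter.Tendsto g (nhdsWithin 0 (Set.Ioi 0)) (nhds 0) ∧
  (∀ t > 0, g t / t < deriv g t ∧ deriv g t ≤ (((n : ℝ) + 4) / ((n : ℝ) - 4)) * (g t / t)) ∧
  (∃ β : ℝ, 0 ≤ β ∧ β < (n : ℝ) ^ 2 * ((n : ℝ) - 4) ^ 2 / 16 ∧
    Filter.Tendsto (deriv g) (nhdsWithin 0 (Set.Ioi 0)) (nhds β)) ∧
  (∃ q c : ℝ, 1 < q ∧ 0 < c ∧ ∀ t ≥ 1, c * t ^ q ≤ g t) ∧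
  g 0 = 0

/-- `v` solves the ODE `v'''' - A v'' + B v = g(v)` on all of `ℝ`. -/
def IsSol (A B : ℝ) (g v : ℝ → ℝ) : Prop :=
  ∀ t : ℝ, iteratedDeriv 4 v t - A * iteratedDeriv 2 v t + B * v t = g (v t)

/-!
Write `A = l + m`, `B = l m` with `l, m ≥ 0`, so that the equation reads
`(D² - l)(D² - m) v = g(v)`. The difference `x` of two solutions then satisfies a cooperative
system in the coordinates `(x, x', x'' - m x, x''' - m x')`, because `g` is nondecreasing: the
positive cone is forward invariant, and a trajectory in the cone that starts with a nonzero third or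
fourth coordinate is unbounded. After a reflection in time and an exchange of the two solutions, any
two bounded solutions with the same value and slope at a point fall under this alternative, hence
coincide.

It remains to see that the infimum `a` is attained, for then the two solutions share the Cauchy data
`(a, 0)` up to a translation. By uniqueness a bounded solution is symmetric about each of its
critical points. With two critical points it is periodic; with at most one it has limits at `±∞`,
neither of which is `a`, because `g(a) < B a` would force a solution tending to `a` to diverge.
-/

open scoped Topology NNReal

section Calculus

lemma hasDerivAt_iteratedDeriv {n k : ℕ} {f : ℝ → ℝ} (hf : ContDiff ℝ n f) (hk : k < n) (t : ℝ) :
    HasDerivAt (iteratedDeriv k f) (iteratedDeriv (k + 1) f t) t := by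
  rw [iteratedDeriv_succ]
  exact (hf.differentiable_iteratedDeriv k (mod_cast hk) t).hasDerivAt

lemma abs_sq_min_zero_sub_le (x y : ℝ) :
    |min y 0 ^ 2 - min x 0 ^ 2 - 2 * min x 0 * (y - x)| ≤ (y - x) ^ 2 := by
  rw [abs_le]
  rcases le_total x 0 with hx | hx <;> rcases le_total y 0 with hy | hy <;>
    simp only [min_eq_left, min_eq_right, hx, hy] <;> constructor <;> nlinarith

lemma hasDerivAt_sq_min_zero (x : ℝ) : HasDerivAt (fun y => min y 0 ^ 2) (2 * min x 0) x := by
  rw [hasDerivAt_iff_isLittleO]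
  refine Asymptotics.IsBigO.trans_isLittleO (g := fun y => ‖y - x‖ ^ 2) ?_
    (Asymptotics.isLittleO_pow_sub_sub x one_lt_two)
  refine .of_bound 1 (.of_forall fun y => ?_)
  simpa [mul_comm] using abs_sq_min_zero_sub_le x y

lemma tendsto_atTop_of_eventually_const_le_deriv {f f' : ℝ → ℝ} {c : ℝ} (hc : 0 < c)
    (hf : ∀ t, HasDerivAt f (f' t) t) (hf' : ∀ᶠ t in atTop, c ≤ f' t) :
    Tendsto f atTop atTop := by
  obtain ⟨T, hT⟩ := eventually_atTop.1 hf'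
  have linear_le : ∀ᶠ t in atTop, c * (t - T) + f T ≤ f t := by
    filter_upwards [eventually_ge_atTop T] with t ht
    have := (convex_Ici T).mul_sub_le_image_sub_of_le_deriv
      (fun t _ => (hf t).continuousAt.continuousWithinAt)
      (fun t _ => (hf t).differentiableAt.differentiableWithinAt)
      (fun t ht => (hf t).deriv ▸ hT t (interior_subset ht)) T self_mem_Ici t ht ht
    linarith
  refine tendsto_atTop_mono' _ linear_le (tendsto_atTop_add_const_right _ _ ?_)
  exact (tendsto_atTop_add_const_right _ _ tendsto_id).const_mul_atTop hc

lemma exists_tendsto_atTop_of_deriv_pos {f : ℝ → ℝ} {s : ℝ} (hf : DifferentiableOn ℝ f (Ioi s))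
    (hbdd : BddAbove (f '' Ioi s)) (hpos : ∀ t ∈ Ioi s, 0 < deriv f t) :
    ∃ b, Tendsto f atTop (𝓝 b) := by
  have mono : MonotoneOn f (Ioi s) :=
    monotoneOn_of_deriv_nonneg (convex_Ioi s) hf.continuousOn (hf.mono interior_subset)
      fun t ht => (hpos t (interior_subset ht)).le
  refine ⟨_, tendsto_comp_val_Ioi_atTop.1
    (tendsto_atTop_ciSup (f := (Ioi s).domRestrict f) mono.monotone ?_)⟩
  rwa [range_domRestrict]

lemma exists_tendsto_atTop_of_deriv_ne_zero {f : ℝ → ℝ} {s : ℝ}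
    (hf : DifferentiableOn ℝ f (Ioi s)) (hbdd : Bornology.IsBounded (f '' Ioi s))
    (hne : ∀ t ∈ Ioi s, deriv f t ≠ 0) : ∃ b, Tendsto f atTop (𝓝 b) := by
  rcases hasDerivWithinAt_forall_lt_or_forall_gt_of_forall_ne (convex_Ioi s)
    (fun t ht => ((hf t ht).differentiableAt (Ioi_mem_nhds ht)).hasDerivAt.hasDerivWithinAt)
    hne with hneg | hpos
  · have bddAbove_neg : BddAbove ((-f) '' Ioi s) := by
      have : (-f) '' Ioi s = -(f '' Ioi s) := by simp [← image_neg_eq_neg, image_image]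
      exact this ▸ hbdd.neg.bddAbove
    obtain ⟨b, hb⟩ := exists_tendsto_atTop_of_deriv_pos hf.neg bddAbove_neg
      fun t ht => by simpa using hneg t ht
    exact ⟨-b, by simpa using hb.neg⟩
  · exact exists_tendsto_atTop_of_deriv_pos hf hbdd.bddAbove hpos

lemma mul_min_sub_le_sub {g : ℝ → ℝ} {s : Set ℝ} {K : ℝ≥0} (hmono : MonotoneOn g s)
    (hlip : LipschitzOnWith K g s) {p q : ℝ} (hp : p ∈ s) (hq : q ∈ s) :
    K * min (p - q) 0 ≤ g p - g q := by
  rcases le_total q p with hqp | hpq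
  · rw [min_eq_right (sub_nonneg.2 hqp), mul_zero]
    exact sub_nonneg.2 (hmono hq hp hqp)
  · have dist_le := hlip.dist_le_mul p hp q hq
    rw [Real.dist_eq, Real.dist_eq, abs_of_nonpos (sub_nonpos.2 hpq)] at dist_le
    rw [min_eq_left (sub_nonpos.2 hpq)]
    linarith [neg_abs_le (g p - g q)]

end Calculus

lemma periodic_of_reflection_symmetric {α β : Type*} [AddCommGroup α] {f : α → β} {r s : α}
    (hr : ∀ t, f (r + t) = f (r - t)) (hs : ∀ t, f (s + t) = f (s - t)) :
    Function.Periodic f (2 • (r - s)) := fun t => by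
  calc f (t + 2 • (r - s)) = f (r + (t + r - 2 • s)) := by congr 1; abel
    _ = f (s + (s - t)) := by rw [hr]; congr 1; abel
    _ = f t := by rw [hs, sub_sub_cancel]

lemma exists_nonneg_add_eq_mul_eq {A B : ℝ} (hA : 0 ≤ A) (hB : 0 ≤ B) (hAB : 4 * B ≤ A ^ 2) :
    ∃ l m : ℝ, 0 ≤ l ∧ 0 ≤ m ∧ A = l + m ∧ B = l * m := by
  have sqrt_le : √(A ^ 2 - 4 * B) ≤ A := Real.sqrt_le_iff.2 ⟨hA, by linarith⟩
  have sq_sqrt := Real.sq_sqrt (sub_nonneg.2 hAB)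
  exact ⟨(A + √(A ^ 2 - 4 * B)) / 2, (A - √(A ^ 2 - 4 * B)) / 2, by positivity, by linarith,
    by ring, by linarith⟩

section Comparison

theorem nonneg_of_quasimonotone {ι : Type*} [Fintype ι] {z z' : ℝ → ι → ℝ} {C : ℝ} (hC : 0 ≤ C)
    (hz : ∀ t i, HasDerivAt (fun t => z t i) (z' t i) t)
    (hz' : ∀ t, 0 ≤ t → ∀ i, C * ∑ j, min (z t j) 0 ≤ z' t i) (h0 : 0 ≤ z 0) {t : ℝ}
    (ht : 0 ≤ t) : 0 ≤ z t := by
  -- Grönwall's inequality for the squared distance of `z` to the positive cone.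
  set E : ℝ → ℝ := fun t => ∑ i, min (z t i) 0 ^ 2
  have hasDerivAt_term (t : ℝ) (i : ι) :
      HasDerivAt (fun t => min (z t i) 0 ^ 2) (2 * min (z t i) 0 * z' t i) t :=
    HasDerivAt.comp t (h₂ := fun y => min y 0 ^ 2) (hasDerivAt_sq_min_zero (z t i)) (hz t i)
  have hasDerivAt_E (t : ℝ) : HasDerivAt E (∑ i, 2 * min (z t i) 0 * z' t i) t :=
    .fun_sum fun i _ => hasDerivAt_term t i
  have deriv_le (t : ℝ) (ht : 0 ≤ t) :
      ∑ i, 2 * min (z t i) 0 * z' t i ≤ 2 * C * Fintype.card ι * E t + 0 := calc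
    _ ≤ ∑ i, 2 * min (z t i) 0 * (C * ∑ j, min (z t j) 0) :=
      Finset.sum_le_sum fun i _ => mul_le_mul_of_nonpos_left (hz' t ht i)
        (mul_nonpos_of_nonneg_of_nonpos two_pos.le (min_le_right _ _))
    _ = 2 * C * (∑ i, min (z t i) 0) ^ 2 := by rw [← Finset.sum_mul, ← Finset.mul_sum]; ring
    _ ≤ 2 * C * (Fintype.card ι * E t) := by gcongr; exact sq_sum_le_card_mul_sum_sq
    _ = _ := by ring
  have E_zero : E 0 = 0 := Finset.sum_eq_zero fun i _ => by simpa using h0 i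
  have E_nonpos : E t ≤ 0 := by
    have := le_gronwallBound_of_liminf_deriv_right_le
      (fun s _ => (hasDerivAt_E s).continuousAt.continuousWithinAt)
      (fun s _ _ => (hasDerivAt_E s).hasDerivWithinAt.liminf_right_slope_le)
      E_zero.le (fun s hs => deriv_le s hs.1) t ⟨ht, le_rfl⟩
    rwa [gronwallBound_ε0_δ0] at this
  intro i
  have sq_nonpos : min (z t i) 0 ^ 2 ≤ 0 :=
    (Finset.single_le_sum (fun j _ => sq_nonneg (min (z t j) 0)) (Finset.mem_univ i)).trans E_nonpos
  exact min_eq_right_iff.1 (pow_eq_zero_iff two_ne_zero |>.1 (sq_nonpos.antisymm (sq_nonneg _)))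

/-- The coordinates `(x, x', y, y')` with `y = x'' - m x`, in which a fourth order equation with
principal part `(D² - l)(D² - m)` becomes a first order system with nonnegative coefficients. -/
def factoredJet (m : ℝ) (x : ℝ → ℝ) (t : ℝ) : Fin 4 → ℝ :=
  ![x t, iteratedDeriv 1 x t, iteratedDeriv 2 x t - m * x t,
    iteratedDeriv 3 x t - m * iteratedDeriv 1 x t]

variable {l m L : ℝ} {x : ℝ → ℝ}

lemma hasDerivAt_factoredJet (hx : ContDiff ℝ 4 x) (t : ℝ) (i : Fin 4) :
    HasDerivAt (fun t => factoredJet m x t i)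
      (![iteratedDeriv 1 x t, iteratedDeriv 2 x t, iteratedDeriv 3 x t - m * iteratedDeriv 1 x t,
        iteratedDeriv 4 x t - m * iteratedDeriv 2 x t] i) t := by
  have h {k : ℕ} (hk : k < 4) := hasDerivAt_iteratedDeriv (n := 4) hx hk t
  have h₀ : HasDerivAt x (iteratedDeriv 1 x t) t := by simpa using h (k := 0) (by norm_num)
  have h₁ := h (k := 1) (by norm_num)
  fin_cases i
  · exact h₀
  · exact h₁
  · exact (h (by norm_num)).sub (h₀.const_mul m)
  · exact (h (by norm_num)).sub (h₁.const_mul m)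

theorem factoredJet_nonneg (hl : 0 ≤ l) (hm : 0 ≤ m) (hL : 0 ≤ L) (hx : ContDiff ℝ 4 x)
    (hode : ∀ t, 0 ≤ t → L * min (x t) 0 ≤
      iteratedDeriv 4 x t - (l + m) * iteratedDeriv 2 x t + l * m * x t)
    (h0 : 0 ≤ factoredJet m x 0) {t : ℝ} (ht : 0 ≤ t) : 0 ≤ factoredJet m x t := by
  refine nonneg_of_quasimonotone (C := 1 + l + m + L) (by positivity)
    (hasDerivAt_factoredJet hx) (fun t ht => ?_) h0 ht
  set S := ∑ j, min (factoredJet m x t j) 0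
  have S_le_min (j : Fin 4) : S ≤ min (factoredJet m x t j) 0 := by
    rw [show S = _ from (Finset.sum_erase_add _ _ (Finset.mem_univ j)).symm]
    exact add_le_of_nonpos_left (Finset.sum_nonpos fun _ _ => min_le_right _ _)
  have S_nonpos : S ≤ 0 := (S_le_min 0).trans (min_le_right _ _)
  have S_le (j : Fin 4) : S ≤ factoredJet m x t j := (S_le_min j).trans (min_le_left _ _)
  have lS_nonpos := mul_nonpos_of_nonneg_of_nonpos hl S_nonpos
  have mS_nonpos := mul_nonpos_of_nonneg_of_nonpos hm S_nonpos
  have LS_nonpos := mul_nonpos_of_nonneg_of_nonpos hL S_nonpos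
  have S_le_x' : S ≤ iteratedDeriv 1 x t := S_le 1
  have S_le_y : S ≤ iteratedDeriv 2 x t - m * x t := S_le 2
  have S_le_y' : S ≤ iteratedDeriv 3 x t - m * iteratedDeriv 1 x t := S_le 3
  have mS_le : m * S ≤ m * x t := mul_le_mul_of_nonneg_left (S_le 0) hm
  have lS_le := mul_le_mul_of_nonneg_left S_le_y hl
  have LS_le : L * S ≤ L * min (x t) 0 := mul_le_mul_of_nonneg_left (S_le_min 0) hL
  have forcing_le := hode t ht
  intro i
  fin_cases i <;> simp only [Fin.zero_eta, Fin.mk_one, Fin.reduceFinMk, Matrix.cons_val] <;>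
    linarith

lemma monotoneOn_factoredJet (hl : 0 ≤ l) (hm : 0 ≤ m) (hL : 0 ≤ L) (hx : ContDiff ℝ 4 x)
    (hode : ∀ t, 0 ≤ t → L * min (x t) 0 ≤
      iteratedDeriv 4 x t - (l + m) * iteratedDeriv 2 x t + l * m * x t)
    (h0 : 0 ≤ factoredJet m x 0) (i : Fin 4) :
    MonotoneOn (fun t => factoredJet m x t i) (Ici 0) := by
  have deriv_jet := hasDerivAt_factoredJet (m := m) hx
  refine monotoneOn_of_deriv_nonneg (convex_Ici 0)
    (fun t _ => (deriv_jet t i).continuousAt.continuousWithinAt)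
    (fun t _ => (deriv_jet t i).differentiableAt.differentiableWithinAt) fun t ht => ?_
  replace ht : 0 ≤ t := interior_subset ht
  have nonneg := factoredJet_nonneg hl hm hL hx hode h0 ht
  have x_nonneg : 0 ≤ x t := nonneg 0
  have y_nonneg : 0 ≤ iteratedDeriv 2 x t - m * x t := nonneg 2
  have mx_nonneg := mul_nonneg hm x_nonneg
  have ly_nonneg := mul_nonneg hl y_nonneg
  have forcing_nonneg := hode t ht
  rw [min_eq_right x_nonneg] at forcing_nonneg
  rw [(deriv_jet t i).deriv]
  fin_cases i
  · exact nonneg 1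
  · simp only [Fin.mk_one, Matrix.cons_val]
    linarith
  · exact nonneg 3
  · simp only [Fin.reduceFinMk, Matrix.cons_val]
    linarith

theorem tendsto_atTop_of_factoredJet_pos (hl : 0 ≤ l) (hm : 0 ≤ m) (hL : 0 ≤ L)
    (hx : ContDiff ℝ 4 x)
    (hode : ∀ t, 0 ≤ t → L * min (x t) 0 ≤
      iteratedDeriv 4 x t - (l + m) * iteratedDeriv 2 x t + l * m * x t)
    (h0 : 0 ≤ factoredJet m x 0) (hpos : 0 < factoredJet m x 0 2 ∨ 0 < factoredJet m x 0 3) :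
    Tendsto x atTop atTop := by
  have nonneg {t : ℝ} (ht : 0 ≤ t) := factoredJet_nonneg hl hm hL hx hode h0 ht
  have deriv_jet (t : ℝ) (i : Fin 4) := hasDerivAt_factoredJet (m := m) hx t i
  have mono := monotoneOn_factoredJet hl hm hL hx hode h0
  obtain ⟨c, hc, le_two⟩ : ∃ c > 0, ∀ᶠ t in atTop, c ≤ factoredJet m x t 2 := by
    rcases hpos with hpos | hpos
    · refine ⟨_, hpos, ?_⟩
      filter_upwards [eventually_ge_atTop 0] with t ht using mono 2 self_mem_Ici ht ht
    · refine ⟨1, one_pos, Tendsto.eventually_ge_atTop ?_ 1⟩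
      refine tendsto_atTop_of_eventually_const_le_deriv hpos (deriv_jet · 2) ?_
      filter_upwards [eventually_ge_atTop 0] with t ht using mono 3 self_mem_Ici ht ht
  have tendsto_one : Tendsto (fun t => factoredJet m x t 1) atTop atTop := by
    refine tendsto_atTop_of_eventually_const_le_deriv hc (deriv_jet · 1) ?_
    filter_upwards [le_two, eventually_ge_atTop 0] with t hct ht
    exact hct.trans (sub_le_self _ (mul_nonneg hm (nonneg ht 0)))
  exact tendsto_atTop_of_eventually_const_le_deriv one_pos (deriv_jet · 0)
    (tendsto_one.eventually_ge_atTop 1)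

end Comparison

section Solutions

/-- `v` is a `C⁴` solution of `v'''' - A v'' + B v = g(v)` on `ℝ` with values in `s`. Taking `s`
to be bounded encodes that the solution is bounded. -/
structure IsSolIn (A B : ℝ) (g : ℝ → ℝ) (s : Set ℝ) (v : ℝ → ℝ) : Prop where
  contDiff : ContDiff ℝ 4 v
  isSol : IsSol A B g v
  mem : ∀ t, v t ∈ s

namespace IsSolIn

variable {A B a b l m M : ℝ} {K : ℝ≥0} {g v w : ℝ → ℝ} {s : Set ℝ}

lemma of_iInf_eq (hv : ContDiff ℝ 4 v) (hsol : IsSol A B g v) (hbdd : ∀ t, |v t| ≤ M)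
    (hinf : ⨅ t, v t = a) : IsSolIn A B g (Icc a M) v where
  contDiff := hv
  isSol := hsol
  mem t := by
    have bddBelow : BddBelow (range v) :=
      ⟨-M, by rintro _ ⟨t, rfl⟩; exact (abs_le.1 (hbdd t)).1⟩
    exact ⟨hinf ▸ ciInf_le bddBelow t, (abs_le.1 (hbdd t)).2⟩

lemma comp_add_const (hv : IsSolIn A B g s v) (c : ℝ) : IsSolIn A B g s fun t => v (t + c) where
  contDiff := hv.contDiff.comp (contDiff_id.add contDiff_const)
  isSol t := by simpa only [iteratedDeriv_comp_add_const] using hv.isSol (t + c)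
  mem t := hv.mem (t + c)

lemma comp_neg (hv : IsSolIn A B g s v) : IsSolIn A B g s fun t => v (-t) where
  contDiff := hv.contDiff.comp contDiff_neg
  isSol t := by
    simpa [iteratedDeriv_comp_neg, Even.neg_one_pow (show Even 4 by decide)] using hv.isSol (-t)
  mem t := hv.mem (-t)

lemma iteratedDeriv_sub (hv : IsSolIn A B g s v) (hw : IsSolIn A B g s w) {k : ℕ} (hk : k ≤ 4)
    (t : ℝ) : iteratedDeriv k (v - w) t = iteratedDeriv k v t - iteratedDeriv k w t :=
  _root_.iteratedDeriv_sub (hv.contDiff.contDiffAt.of_le (mod_cast hk))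
    (hw.contDiff.contDiffAt.of_le (mod_cast hk))

lemma mul_min_sub_le_fourthOrder_sub (hmono : MonotoneOn g s) (hlip : LipschitzOnWith K g s)
    (hv : IsSolIn A B g s v) (hw : IsSolIn A B g s w) (t : ℝ) :
    K * min ((v - w) t) 0 ≤
      iteratedDeriv 4 (v - w) t - A * iteratedDeriv 2 (v - w) t + B * (v - w) t := by
  rw [hv.iteratedDeriv_sub hw le_rfl, hv.iteratedDeriv_sub hw (by norm_num), Pi.sub_apply]
  linarith [hv.isSol t, hw.isSol t, mul_min_sub_le_sub hmono hlip (hv.mem t) (hw.mem t)]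

lemma factoredJet_sub (hv : IsSolIn A B g s v) (hw : IsSolIn A B g s w) (h₀ : v 0 = w 0)
    (h₁ : deriv v 0 = deriv w 0) :
    factoredJet m (v - w) 0 = ![0, 0, iteratedDeriv 2 v 0 - iteratedDeriv 2 w 0,
      iteratedDeriv 3 v 0 - iteratedDeriv 3 w 0] := by
  simp [factoredJet, hv.iteratedDeriv_sub hw, h₀, h₁]

lemma factoredJet_sub_nonneg (hv : IsSolIn A B g s v) (hw : IsSolIn A B g s w) (h₀ : v 0 = w 0)
    (h₁ : deriv v 0 = deriv w 0) (h₂ : iteratedDeriv 2 w 0 ≤ iteratedDeriv 2 v 0)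
    (h₃ : iteratedDeriv 3 w 0 ≤ iteratedDeriv 3 v 0) : 0 ≤ factoredJet m (v - w) 0 := by
  rw [hv.factoredJet_sub hw h₀ h₁]
  intro i
  fin_cases i <;> simp [h₂, h₃]

lemma le_of_iteratedDeriv_le (hl : 0 ≤ l) (hm : 0 ≤ m) (hmono : MonotoneOn g s)
    (hlip : LipschitzOnWith K g s) (hv : IsSolIn (l + m) (l * m) g s v)
    (hw : IsSolIn (l + m) (l * m) g s w) (h₀ : v 0 = w 0) (h₁ : deriv v 0 = deriv w 0)
    (h₂ : iteratedDeriv 2 w 0 ≤ iteratedDeriv 2 v 0)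
    (h₃ : iteratedDeriv 3 w 0 ≤ iteratedDeriv 3 v 0) {t : ℝ} (ht : 0 ≤ t) : w t ≤ v t :=
  sub_nonneg.1 (factoredJet_nonneg hl hm K.2 (hv.contDiff.sub hw.contDiff)
    (fun t _ => mul_min_sub_le_fourthOrder_sub hmono hlip hv hw t)
    (hv.factoredJet_sub_nonneg hw h₀ h₁ h₂ h₃) ht 0)

lemma iteratedDeriv_eq_of_le (hs : Bornology.IsBounded s) (hl : 0 ≤ l) (hm : 0 ≤ m)
    (hmono : MonotoneOn g s) (hlip : LipschitzOnWith K g s) (hv : IsSolIn (l + m) (l * m) g s v)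
    (hw : IsSolIn (l + m) (l * m) g s w) (h₀ : v 0 = w 0) (h₁ : deriv v 0 = deriv w 0)
    (h₂ : iteratedDeriv 2 w 0 ≤ iteratedDeriv 2 v 0)
    (h₃ : iteratedDeriv 3 w 0 ≤ iteratedDeriv 3 v 0) :
    iteratedDeriv 2 v 0 = iteratedDeriv 2 w 0 ∧ iteratedDeriv 3 v 0 = iteratedDeriv 3 w 0 := by
  by_contra hne
  have factoredJet_pos : 0 < factoredJet m (v - w) 0 2 ∨ 0 < factoredJet m (v - w) 0 3 := by
    simp only [hv.factoredJet_sub hw h₀ h₁, Matrix.cons_val, sub_pos]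
    by_contra! hle
    exact hne ⟨hle.1.antisymm h₂, hle.2.antisymm h₃⟩
  have tendsto_sub : Tendsto (v - w) atTop atTop :=
    tendsto_atTop_of_factoredJet_pos hl hm K.2 (hv.contDiff.sub hw.contDiff)
      (fun t _ => mul_min_sub_le_fourthOrder_sub hmono hlip hv hw t)
      (hv.factoredJet_sub_nonneg hw h₀ h₁ h₂ h₃) factoredJet_pos
  refine not_bddAbove_of_tendsto_atTop tendsto_sub ((hs.sub hs).bddAbove.mono ?_)
  rintro _ ⟨t, rfl⟩
  exact sub_mem_sub (hv.mem t) (hw.mem t)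

lemma iteratedDeriv_eq (hs : Bornology.IsBounded s) (hl : 0 ≤ l) (hm : 0 ≤ m)
    (hmono : MonotoneOn g s) (hlip : LipschitzOnWith K g s) (hv : IsSolIn (l + m) (l * m) g s v)
    (hw : IsSolIn (l + m) (l * m) g s w) (h₀ : v 0 = w 0) (h₁ : deriv v 0 = deriv w 0) :
    iteratedDeriv 2 v 0 = iteratedDeriv 2 w 0 ∧ iteratedDeriv 3 v 0 = iteratedDeriv 3 w 0 := by
  wlog h₂ : iteratedDeriv 2 w 0 ≤ iteratedDeriv 2 v 0 generalizing v w
  · exact (this hw hv h₀.symm h₁.symm (le_of_not_ge h₂)).imp Eq.symm Eq.symm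
  rcases le_total (iteratedDeriv 3 w 0) (iteratedDeriv 3 v 0) with h₃ | h₃
  · exact iteratedDeriv_eq_of_le hs hl hm hmono hlip hv hw h₀ h₁ h₂ h₃
  · have := iteratedDeriv_eq_of_le hs hl hm hmono hlip hv.comp_neg hw.comp_neg
      (by simpa using h₀) (by simpa [deriv_comp_neg] using h₁)
      (by simpa [iteratedDeriv_comp_neg] using h₂)
      (by simpa [iteratedDeriv_comp_neg, Odd.neg_one_pow (show Odd 3 by decide)] using h₃)
    simpa [iteratedDeriv_comp_neg, Odd.neg_one_pow (show Odd 3 by decide)] using this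

theorem eq_of_deriv_eq (hs : Bornology.IsBounded s) (hl : 0 ≤ l) (hm : 0 ≤ m)
    (hmono : MonotoneOn g s) (hlip : LipschitzOnWith K g s) (hv : IsSolIn (l + m) (l * m) g s v)
    (hw : IsSolIn (l + m) (l * m) g s w) (h₀ : v 0 = w 0) (h₁ : deriv v 0 = deriv w 0) :
    v = w := by
  have eq_on_nonneg {v w : ℝ → ℝ} (hv : IsSolIn (l + m) (l * m) g s v)
      (hw : IsSolIn (l + m) (l * m) g s w) (h₀ : v 0 = w 0) (h₁ : deriv v 0 = deriv w 0) (t : ℝ)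
      (ht : 0 ≤ t) : v t = w t := by
    obtain ⟨h₂, h₃⟩ := iteratedDeriv_eq hs hl hm hmono hlip hv hw h₀ h₁
    exact le_antisymm
      (le_of_iteratedDeriv_le hl hm hmono hlip hw hv h₀.symm h₁.symm h₂.le h₃.le ht)
      (le_of_iteratedDeriv_le hl hm hmono hlip hv hw h₀ h₁ h₂.ge h₃.ge ht)
  funext t
  rcases le_total 0 t with ht | ht
  · exact eq_on_nonneg hv hw h₀ h₁ t ht
  · simpa using eq_on_nonneg hv.comp_neg hw.comp_neg (by simpa using h₀)
      (by simpa [deriv_comp_neg] using h₁) (-t) (neg_nonneg.2 ht)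

theorem eq_translate (hs : Bornology.IsBounded s) (hl : 0 ≤ l) (hm : 0 ≤ m)
    (hmono : MonotoneOn g s) (hlip : LipschitzOnWith K g s) (hv : IsSolIn (l + m) (l * m) g s v)
    (hw : IsSolIn (l + m) (l * m) g s w) {p q : ℝ} (h₀ : v p = w q) (h₁ : deriv v p = deriv w q)
    (t : ℝ) : w t = v (t + (p - q)) := by
  have := eq_of_deriv_eq hs hl hm hmono hlip (hv.comp_add_const p) (hw.comp_add_const q)
    (by simpa using h₀) (by simpa [deriv_comp_add_const] using h₁)
  simpa [sub_add_eq_add_sub, add_sub_assoc] using (congr_fun this (t - q)).symm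

theorem reflection_symmetric (hs : Bornology.IsBounded s) (hl : 0 ≤ l) (hm : 0 ≤ m)
    (hmono : MonotoneOn g s) (hlip : LipschitzOnWith K g s) (hv : IsSolIn (l + m) (l * m) g s v)
    {c : ℝ} (hc : deriv v c = 0) (t : ℝ) : v (c + t) = v (c - t) := by
  have := eq_translate hs hl hm hmono hlip hv hv.comp_neg (p := c) (q := -c) (by simp)
    (by simp [deriv_comp_neg, hc]) (t - c)
  simpa [add_comm] using this.symm

theorem not_tendsto_atTop (hv : IsSolIn A B g s v) (hgb : g b < B * b)
    (hcont : ContinuousWithinAt g s b) : ¬ Tendsto v atTop (𝓝 b) := fun hlim => by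
  have deriv₀ (t : ℝ) : HasDerivAt v (iteratedDeriv 1 v t) t := by
    simpa using hasDerivAt_iteratedDeriv (n := 4) (k := 0) hv.contDiff (by norm_num) t
  have deriv₁ := hasDerivAt_iteratedDeriv (n := 4) (k := 1) hv.contDiff (by norm_num)
  have deriv₂ := hasDerivAt_iteratedDeriv (n := 4) (k := 2) hv.contDiff (by norm_num)
  have deriv₃ := hasDerivAt_iteratedDeriv (n := 4) (k := 3) hv.contDiff (by norm_num)
  have tendsto_forcing : Tendsto (fun t => B * v t - g (v t)) atTop (𝓝 (B * b - g b)) :=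
    (hlim.const_mul B).sub (hcont.tendsto.comp
      (tendsto_nhdsWithin_iff.2 ⟨hlim, .of_forall hv.mem⟩))
  obtain ⟨c, hc, hcb⟩ := exists_between (sub_pos.2 hgb)
  have tendsto₃ : Tendsto (fun t => A * iteratedDeriv 1 v t - iteratedDeriv 3 v t) atTop atTop :=
    tendsto_atTop_of_eventually_const_le_deriv hc
      (fun t => ((deriv₁ t).const_mul A).sub (deriv₃ t))
      ((tendsto_forcing.eventually_const_le hcb).mono fun t ht => by linarith [hv.isSol t])
  have tendsto₂ : Tendsto (fun t => A * v t - iteratedDeriv 2 v t) atTop atTop :=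
    tendsto_atTop_of_eventually_const_le_deriv one_pos
      (fun t => ((deriv₀ t).const_mul A).sub (deriv₂ t)) (tendsto₃.eventually_ge_atTop 1)
  have tendsto_neg_deriv₂ : Tendsto (fun t => -iteratedDeriv 2 v t) atTop atTop := by
    simpa [neg_add_eq_sub] using (hlim.const_mul A).neg.add_atTop tendsto₂
  have tendsto_neg_deriv₁ : Tendsto (fun t => -iteratedDeriv 1 v t) atTop atTop :=
    tendsto_atTop_of_eventually_const_le_deriv one_pos (fun t => (deriv₁ t).neg)
      (tendsto_neg_deriv₂.eventually_ge_atTop 1)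
  have tendsto_neg : Tendsto (fun t => -v t) atTop atTop :=
    tendsto_atTop_of_eventually_const_le_deriv one_pos (fun t => (deriv₀ t).neg)
      (tendsto_neg_deriv₁.eventually_ge_atTop 1)
  exact not_tendsto_nhds_of_tendsto_atTop tendsto_neg (-b) hlim.neg

lemma exists_lt_tendsto_atTop (hga : g a < B * a) (hcont : ContinuousWithinAt g (Icc a M) a)
    (hv : IsSolIn A B g (Icc a M) v) (hcrit : BddAbove {t | deriv v t = 0}) :
    ∃ b, a < b ∧ Tendsto v atTop (𝓝 b) := by
  obtain ⟨S, hS⟩ := hcrit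
  obtain ⟨b, hb⟩ := exists_tendsto_atTop_of_deriv_ne_zero (s := S)
    (hv.contDiff.differentiable four_ne_zero).differentiableOn
    ((Metric.isBounded_Icc a M).subset (image_subset_iff.2 fun t _ => hv.mem t))
    fun t ht h => (hS h).not_gt ht
  refine ⟨b, lt_of_le_of_ne (ge_of_tendsto' hb fun t => (hv.mem t).1) ?_, hb⟩
  rintro rfl
  exact hv.not_tendsto_atTop hga hcont hb

theorem exists_isMin (hl : 0 ≤ l) (hm : 0 ≤ m) (hmono : MonotoneOn g (Icc a M))
    (hlip : LipschitzOnWith K g (Icc a M)) (hga : g a < l * m * a)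
    (hv : IsSolIn (l + m) (l * m) g (Icc a M) v) (hinf : ⨅ t, v t = a) :
    ∃ t, ∀ u, v t ≤ v u := by
  have cont := hv.contDiff.continuous
  rcases {t | deriv v t = 0}.subsingleton_or_nontrivial with hcrit | ⟨p, hp, q, hq, hpq⟩
  · have left_mem : a ∈ Icc a M := left_mem_Icc.2 ((hv.mem 0).1.trans (hv.mem 0).2)
    have cont_g := hlip.continuousOn a left_mem
    obtain ⟨b, hab, hb⟩ := hv.exists_lt_tendsto_atTop hga cont_g hcrit.finite.bddAbove
    obtain ⟨b', hab', hb'⟩ := hv.comp_neg.exists_lt_tendsto_atTop hga cont_g <| by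
      simpa [deriv_comp_neg] using hcrit.finite.bddBelow.neg
    obtain ⟨t₀, ht₀⟩ := exists_lt_of_ciInf_lt (hinf.trans_lt (lt_min hab hab'))
    refine cont.exists_forall_le' t₀ ?_
    rw [cocompact_eq_atBot_atTop, eventually_sup]
    refine ⟨?_, hb.eventually_const_le (ht₀.trans_le (min_le_left _ _))⟩
    simpa using tendsto_neg_atBot_atTop.eventually
      (hb'.eventually_const_le (ht₀.trans_le (min_le_right _ _)))
  · have symm {c : ℝ} (hc : deriv v c = 0) :=
      reflection_symmetric (Metric.isBounded_Icc a M) hl hm hmono hlip hv hc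
    have periodic := periodic_of_reflection_symmetric (symm hp) (symm hq)
    have compact_range : IsCompact (range v) :=
      periodic.compact_of_continuous (smul_ne_zero two_ne_zero (sub_ne_zero.2 hpq)) cont
    obtain ⟨_, ⟨t, rfl⟩, ht⟩ := compact_range.exists_isLeast (range_nonempty v)
    exact ⟨t, fun u => ht (mem_range_self u)⟩

theorem exists_eq_iInf_and_deriv_eq_zero (hl : 0 ≤ l) (hm : 0 ≤ m)
    (hmono : MonotoneOn g (Icc a M)) (hlip : LipschitzOnWith K g (Icc a M))
    (hga : g a < l * m * a) (hv : IsSolIn (l + m) (l * m) g (Icc a M) v) (hinf : ⨅ t, v t = a) :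
    ∃ t, v t = a ∧ deriv v t = 0 := by
  obtain ⟨t, ht⟩ := exists_isMin hl hm hmono hlip hga hv hinf
  have isLocalMin : IsLocalMin v t := .of_forall ht
  exact ⟨t, (hinf ▸ le_ciInf ht).antisymm (hv.mem t).1, isLocalMin.deriv_eq_zero⟩

end IsSolIn

end Solutions

theorem stmt_3_general {A B a : ℝ} {g v w : ℝ → ℝ} (hA : 0 ≤ A) (hB : 0 ≤ B)
    (hAB : 4 * B ≤ A ^ 2) (hmono : MonotoneOn g (Ici a)) (hlip : LocallyLipschitzOn (Ici a) g)
    (hga : g a < B * a) (hv4 : ContDiff ℝ 4 v) (hw4 : ContDiff ℝ 4 w)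
    (hvbdd : ∃ M : ℝ, ∀ t, |v t| ≤ M) (hwbdd : ∃ M : ℝ, ∀ t, |w t| ≤ M)
    (hvsol : IsSol A B g v) (hwsol : IsSol A B g w)
    (hvinf : ⨅ t, v t = a) (hwinf : ⨅ t, w t = a) : ∃ τ : ℝ, ∀ t, w t = v (t + τ) := by
  obtain ⟨l, m, hl, hm, rfl, rfl⟩ := exists_nonneg_add_eq_mul_eq hA hB hAB
  obtain ⟨M₁, hM₁⟩ := hvbdd
  obtain ⟨M₂, hM₂⟩ := hwbdd
  set M := max M₁ M₂
  have hv := IsSolIn.of_iInf_eq hv4 hvsol (fun t => (hM₁ t).trans (le_max_left M₁ M₂)) hvinf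
  have hw := IsSolIn.of_iInf_eq hw4 hwsol (fun t => (hM₂ t).trans (le_max_right M₁ M₂)) hwinf
  have hmono' : MonotoneOn g (Icc a M) := hmono.mono Icc_subset_Ici_self
  obtain ⟨K, hK⟩ :=
    (hlip.mono Icc_subset_Ici_self).exists_lipschitzOnWith_of_compact (isCompact_Icc (b := M))
  obtain ⟨p, hp, hp'⟩ := IsSolIn.exists_eq_iInf_and_deriv_eq_zero hl hm hmono' hK hga hv hvinf
  obtain ⟨q, hq, hq'⟩ := IsSolIn.exists_eq_iInf_and_deriv_eq_zero hl hm hmono' hK hga hw hwinf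
  exact ⟨p - q, IsSolIn.eq_translate (Metric.isBounded_Icc a M) hl hm hmono' hK hv hw
    (hp.trans hq.symm) (hp'.trans hq'.symm)⟩

namespace CondG

variable {n : ℕ} {g : ℝ → ℝ}

lemma monotoneOn (hg : CondG n g) : MonotoneOn g (Ioi 0) := by
  obtain ⟨contDiffOn, pos, -, deriv_bounds, -⟩ := hg
  refine monotoneOn_of_deriv_nonneg (convex_Ioi 0) contDiffOn.continuousOn
    ((contDiffOn.differentiableOn one_ne_zero).mono interior_subset) fun t ht => ?_
  replace ht : 0 < t := interior_subset ht
  exact ((div_pos (pos t ht) ht).trans (deriv_bounds t ht).1).le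

lemma strictMonoOn_div (hg : CondG n g) : StrictMonoOn (fun t => g t / t) (Ioi 0) := by
  obtain ⟨contDiffOn, -, -, deriv_bounds, -⟩ := hg
  have hasDerivAt_div (t : ℝ) (ht : 0 < t) :
      HasDerivAt (fun t => g t / t) ((deriv g t * t - g t * 1) / t ^ 2) t :=
    ((contDiffOn.differentiableOn one_ne_zero t ht).differentiableAt
      (Ioi_mem_nhds ht)).hasDerivAt.div (hasDerivAt_id t) ht.ne'
  refine strictMonoOn_of_deriv_pos (convex_Ioi 0)
    (fun t ht => (hasDerivAt_div t ht).continuousAt.continuousWithinAt) fun t ht => ?_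
  replace ht : 0 < t := interior_subset ht
  have := (div_lt_iff₀ ht).1 (deriv_bounds t ht).1
  rw [(hasDerivAt_div t ht).deriv]
  exact div_pos (by linarith) (pow_pos ht 2)

lemma lt_mul_of_lt (hg : CondG n g) {B a a₀ : ℝ} (ha : 0 < a) (haa₀ : a < a₀)
    (hga₀ : g a₀ = B * a₀) : g a < B * a := by
  have ha₀ := ha.trans haa₀
  have div_lt_div : g a / a < g a₀ / a₀ := hg.strictMonoOn_div ha ha₀ haa₀
  rwa [hga₀, mul_div_cancel_right₀ B ha₀.ne', div_lt_iff₀ ha] at div_lt_div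

end CondG

theorem stmt_3 (n : ℕ) (hn : 5 ≤ n) (g : ℝ → ℝ) (hg : CondG n g)
    (A B : ℝ) (hA : A = ((n : ℝ) * ((n : ℝ) - 4) + 8) / 2)
    (hB : B = (n : ℝ) ^ 2 * ((n : ℝ) - 4) ^ 2 / 16)
    (a₀ : ℝ) (ha₀ : 0 < a₀) (hga₀ : g a₀ = B * a₀)
    (a : ℝ) (ha : 0 < a) (haa₀ : a < a₀)
    (v w : ℝ → ℝ) (hv4 : ContDiff ℝ 4 v) (hw4 : ContDiff ℝ 4 w)
    (hvpos : ∀ t, 0 < v t) (hwpos : ∀ t, 0 < w t)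
    (hvbdd : ∃ M : ℝ, ∀ t, |v t| ≤ M) (hwbdd : ∃ M : ℝ, ∀ t, |w t| ≤ M)
    (hvsol : IsSol A B g v) (hwsol : IsSol A B g w)
    (hvinf : (⨅ t : ℝ, v t) = a) (hwinf : (⨅ t : ℝ, w t) = a) :
    ∃ τ : ℝ, ∀ t, w t = v (t + τ) :=
  have subset : Ici a ⊆ Ioi 0 := Ici_subset_Ioi.2 ha
  stmt_3_general (by nlinarith [sq_nonneg ((n : ℝ) - 2)]) (by rw [hB]; positivity)
    (by rw [hA, hB]; nlinarith [sq_nonneg ((n : ℝ) - 2)]) (hg.monotoneOn.mono subset)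
    ((hg.1.locallyLipschitzOn (convex_Ioi 0)).mono subset) (hg.lt_mul_of_lt ha haa₀ hga₀)
    hv4 hw4 hvbdd hwbdd hvsol hwsol hvinf hwinf
end
end

section
/- There exists a C⁴ positive solution v : ℝ → ℝ of the ODE v''''(t) − A·v''(t) + B·v(t) = g(v(t)) which is homoclinic to zero and symmetric-decreasing: v(t) → 0 as t → +∞ and as t → −∞, v(−t) = v(t) for all t ∈ ℝ, and v is nonincreasing on [0, ∞). -/
open Real Filter Set

noncomputable section

/-! With `h x = B x - g x` the equation is `v'''' = A v'' - h(v)`; its first integral is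
`v' v''' - v''² / 2 - A v'² / 2 + W(v)`, where `W' = h` and `W 0 = 0`. Since `g x / x` increases
through the value `B`, the force `h` is positive up to some `τ` and nonpositive afterwards, and `W`
is positive up to a first zero `α > τ`. Shoot with the even solutions of zero energy, whose initial
data are `(a, 0, -√(2 W(a)), 0)` with `0 < a < α`.

Such a solution misses the homoclinic in one of two ways: it decreases until it becomes negative,
or it starts to increase while still positive. The two alternatives are open in `a` and exclude
each other; the first occurs at `a = τ`, where `h` pushes a concave profile down, and the second
near `a = α`, where `v'' 0 = 0` and `v'''' 0 = -h(α) > 0`. As `(0, α)` is connected, some `a` avoids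
both.

The solution with this `a` cannot first vanish at a point `r`: there `v' = v'' = 0` and `v''' ≤ 0`,
while `4 B ≤ A²` gives a real factorization `A = p + q`, `B = p q` of the linear part, and the
comparison principle for `w'' ≥ p w` with `w = v'' - q v`, run backwards from `r`, contradicts
`v'' 0 < 0`. So `v` is positive and decreasing. A limit in `(0, τ)`, where `h > 0`, would drive `v`
to `-∞`, and a limit in `[τ, α)` would force `v'' 0 ≥ 0`; hence `v → 0`. -/

open scoped NNReal Topology

section GlobalFlow

variable {E : Type*} [NormedAddCommGroup E] [NormedSpace ℝ E]

lemma norm_integral_le_of_norm_le_exp_abs {f : ℝ → E} {C l : ℝ} (hC : 0 ≤ C) (hl : 0 < l)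
    (hf : ∀ s, ‖f s‖ ≤ C * exp (l * |s|)) (t : ℝ) :
    ‖∫ s in (0 : ℝ)..t, f s‖ ≤ C / l * exp (l * |t|) := by
  wlog ht : 0 ≤ t generalizing f t
  · have hneg := this (f := fun s => f (-s)) (fun s => by simpa using hf (-s)) (-t) (by linarith)
    rwa [intervalIntegral.integral_comp_neg, neg_neg, neg_zero, intervalIntegral.integral_symm,
      norm_neg, abs_neg] at hneg
  calc ‖∫ s in (0 : ℝ)..t, f s‖ ≤ ∫ s in (0 : ℝ)..t, C * exp (l * s) := by
        refine intervalIntegral.norm_integral_le_of_norm_le ht (.of_forall fun s hs => ?_)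
          (Continuous.intervalIntegrable (by fun_prop) _ _)
        simpa only [abs_of_pos hs.1] using hf s
    _ = C / l * (exp (l * t) - 1) := by
        rw [intervalIntegral.integral_const_mul,
          intervalIntegral.integral_comp_mul_left (fun s => exp s) hl.ne', integral_exp, mul_zero,
          exp_zero, smul_eq_mul, div_eq_mul_inv, mul_assoc]
    _ ≤ C / l * exp (l * |t|) := by
        rw [abs_of_nonneg ht]
        gcongr
        linarith

/-- The Picard operator of the autonomous equation `x' = Φ x`, `x 0 = x₀`, conjugated by the weight
`exp (l * |t|)`. For `l` larger than the Lipschitz constant of `Φ` it contracts the sup norm on the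
whole line. -/
def weightedPicard (Φ : E → E) (l : ℝ) (x₀ : E) (y : ℝ → E) (t : ℝ) : E :=
  exp (-(l * |t|)) • ODE.picard (fun _ => Φ) 0 x₀ (fun s => exp (l * |s|) • y s) t

variable {Φ : E → E} {K : ℝ≥0} {l : ℝ} {x₀ : E} {y z : ℝ → E}

lemma hasDerivAt_picard [CompleteSpace E] (hΦ : Continuous Φ) (hy : Continuous y) (t : ℝ) :
    HasDerivAt (ODE.picard (fun _ => Φ) 0 x₀ y) (Φ (y t)) t :=
  ((hΦ.comp hy).integral_hasStrictDerivAt 0 t).hasDerivAt.const_add x₀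

lemma continuous_weightedPicard (hΦ : Continuous Φ) (hy : Continuous y) :
    Continuous (weightedPicard Φ l x₀ y) := by
  have _hint : Continuous fun t => ∫ s in (0 : ℝ)..t, Φ (exp (l * |s|) • y s) :=
    intervalIntegral.continuous_primitive
      (fun a b => Continuous.intervalIntegrable (by fun_prop) a b) 0
  unfold weightedPicard ODE.picard
  fun_prop

lemma norm_weightedPicard_zero_le (hl : 0 < l) (t : ℝ) :
    ‖weightedPicard Φ l x₀ 0 t‖ ≤ ‖x₀‖ + ‖Φ 0‖ / l := by
  have hone (s : ℝ) : 1 ≤ exp (l * |s|) := one_le_exp (by positivity)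
  have hint := norm_integral_le_of_norm_le_exp_abs (f := fun _ => Φ 0) (norm_nonneg (Φ 0)) hl
    (fun s => le_mul_of_one_le_right (norm_nonneg _) (hone s)) t
  rw [weightedPicard, norm_smul, norm_of_nonneg (exp_pos _).le, exp_neg,
    inv_mul_le_iff₀ (exp_pos _)]
  simp only [ODE.picard_apply, Pi.zero_apply, smul_zero]
  calc _ ≤ ‖x₀‖ + ‖∫ _ in (0 : ℝ)..t, Φ 0‖ := norm_add_le _ _
    _ ≤ exp (l * |t|) * ‖x₀‖ + ‖Φ 0‖ / l * exp (l * |t|) :=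
        add_le_add (le_mul_of_one_le_left (norm_nonneg _) (hone t)) hint
    _ = exp (l * |t|) * (‖x₀‖ + ‖Φ 0‖ / l) := by ring

lemma norm_weightedPicard_sub_le (hΦ : LipschitzWith K Φ) (hl : 0 < l) (hy : Continuous y)
    (hz : Continuous z) {C : ℝ} (hC : ∀ s, ‖y s - z s‖ ≤ C) (t : ℝ) :
    ‖weightedPicard Φ l x₀ y t - weightedPicard Φ l x₀ z t‖ ≤ K / l * C := by
  have hΦc := hΦ.continuous
  have hC₀ : 0 ≤ C := (norm_nonneg _).trans (hC 0)
  have hbound (s : ℝ) :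
      ‖Φ (exp (l * |s|) • y s) - Φ (exp (l * |s|) • z s)‖ ≤ K * C * exp (l * |s|) := by
    refine (hΦ.norm_sub_le _ _).trans ?_
    rw [← smul_sub, norm_smul, norm_of_nonneg (exp_pos _).le, mul_assoc, mul_comm C]
    gcongr
    exact hC s
  simp only [weightedPicard, ODE.picard_apply]
  rw [← smul_sub, add_sub_add_left_eq_sub, ← intervalIntegral.integral_sub
      (Continuous.intervalIntegrable (by fun_prop) _ _)
      (Continuous.intervalIntegrable (by fun_prop) _ _),
    norm_smul, norm_of_nonneg (exp_pos _).le, exp_neg, inv_mul_le_iff₀ (exp_pos _)]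
  refine (norm_integral_le_of_norm_le_exp_abs (by positivity) hl hbound t).trans_eq ?_
  ring

lemma exists_continuous_weightedPicard_eq_self [CompleteSpace E] (hΦ : LipschitzWith K Φ)
    (x₀ : E) : ∃ y, Continuous y ∧ weightedPicard Φ (K + 1) x₀ y = y := by
  have hl : (0 : ℝ) < K + 1 := by positivity
  let P (y : BoundedContinuousFunction ℝ E) : BoundedContinuousFunction ℝ E :=
    .ofNormedAddCommGroup (weightedPicard Φ (K + 1) x₀ y)
      (continuous_weightedPicard hΦ.continuous y.continuous)
      (K / (K + 1) * ‖y‖ + (‖x₀‖ + ‖Φ 0‖ / (K + 1))) fun t => by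
        refine (norm_le_norm_sub_add _ (weightedPicard Φ (K + 1) x₀ 0 t)).trans (add_le_add ?_
          (norm_weightedPicard_zero_le hl t))
        exact norm_weightedPicard_sub_le hΦ hl y.continuous continuous_zero
          (fun s => by simpa using y.norm_coe_le_norm s) t
  have hP : ContractingWith (K / (K + 1)) P := by
    refine ⟨(div_lt_one (by positivity)).2 (lt_add_one K), .of_dist_le_mul fun y z => ?_⟩
    refine (BoundedContinuousFunction.dist_le (by positivity)).2 fun t => ?_
    rw [dist_eq_norm]
    exact_mod_cast norm_weightedPicard_sub_le hΦ hl y.continuous z.continuous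
      (fun s => by simpa only [dist_eq_norm] using y.dist_coe_le_dist (g := z) s) t
  exact ⟨hP.fixedPoint, hP.fixedPoint.continuous, congrArg (⇑) hP.fixedPoint_isFixedPt⟩

lemma exists_forall_hasDerivAt_of_lipschitzWith [CompleteSpace E] (hΦ : LipschitzWith K Φ)
    (x₀ : E) : ∃ x : ℝ → E, x 0 = x₀ ∧ ∀ t, HasDerivAt x (Φ (x t)) t := by
  obtain ⟨y, hyc, hy⟩ := exists_continuous_weightedPicard_eq_self hΦ x₀
  let x (t : ℝ) : E := exp ((K + 1) * |t|) • y t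
  have hxc : Continuous x := by fun_prop
  have hx : ODE.picard (fun _ => Φ) 0 x₀ x = x := by
    funext t
    rw [← inv_smul_eq_iff₀ (exp_pos ((K + 1) * |t|)).ne', ← exp_neg]
    exact congrFun hy t
  refine ⟨x, ?_, fun t => ?_⟩
  · rw [← hx, ODE.picard_apply₀]
  · simpa only [hx] using hasDerivAt_picard (x₀ := x₀) hΦ.continuous hxc t

lemma hasDerivAt_comp_neg {x x' : ℝ → E} (hx : ∀ t, HasDerivAt x (x' t) t) (t : ℝ) :
    HasDerivAt (fun t => x (-t)) (-x' (-t)) t := by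
  simpa [Function.comp_def] using (hx (-t)).scomp t (hasDerivAt_neg t)

lemma dist_le_of_forall_hasDerivAt (hΦ : LipschitzWith K Φ) {x y : ℝ → E}
    (hx : ∀ t, HasDerivAt x (Φ (x t)) t) (hy : ∀ t, HasDerivAt y (Φ (y t)) t) (t : ℝ) :
    dist (x t) (y t) ≤ dist (x 0) (y 0) * exp (K * |t|) := by
  wlog ht : 0 ≤ t generalizing Φ x y t
  · simpa using this hΦ.neg (hasDerivAt_comp_neg hx) (hasDerivAt_comp_neg hy) (-t) (by linarith)
  simpa [abs_of_nonneg ht] using dist_le_of_trajectories_ODE (fun _ => hΦ)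
    (fun s _ => (hx s).continuousAt.continuousWithinAt) (fun s _ => (hx s).hasDerivWithinAt)
    (fun s _ => (hy s).continuousAt.continuousWithinAt) (fun s _ => (hy s).hasDerivWithinAt)
    le_rfl t ⟨ht, le_rfl⟩

lemma exists_continuous_flow [CompleteSpace E] (hΦ : LipschitzWith K Φ) :
    ∃ X : E → ℝ → E, (∀ x, X x 0 = x) ∧ (∀ x t, HasDerivAt (X x) (Φ (X x t)) t) ∧
      Continuous fun p : E × ℝ => X p.1 p.2 := by
  choose X hX₀ hX using exists_forall_hasDerivAt_of_lipschitzWith hΦ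
  refine ⟨X, hX₀, hX, continuous_iff_continuousAt.2 fun ⟨x, t⟩ => ?_⟩
  have hXx : Continuous (X x) := continuous_iff_continuousAt.2 fun s => (hX x s).continuousAt
  have hbound (p : E × ℝ) :
      dist (X p.1 p.2) (X x t) ≤ dist p.1 x * exp (K * |p.2|) + dist (X x p.2) (X x t) := by
    refine (dist_triangle _ (X x p.2) _).trans (add_le_add_left ?_ _)
    simpa only [hX₀] using dist_le_of_forall_hasDerivAt hΦ (hX p.1) (hX x) p.2
  have hlim : Continuous fun p : E × ℝ =>
      dist p.1 x * exp (K * |p.2|) + dist (X x p.2) (X x t) := by fun_prop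
  exact tendsto_iff_dist_tendsto_zero.2
    (squeeze_zero (fun _ => dist_nonneg) hbound (by simpa using hlim.tendsto (x, t)))

end GlobalFlow

section Calculus

variable {f f' f'' : ℝ → ℝ} {a b c k l : ℝ}

lemma continuous_of_forall_hasDerivAt (hf : ∀ t, HasDerivAt f (f' t) t) : Continuous f :=
  continuous_iff_continuousAt.2 fun t => (hf t).continuousAt

lemma lt_of_hasDerivAt_pos (hf : ∀ t, HasDerivAt f (f' t) t) (hab : a < b)
    (hpos : ∀ t ∈ Ioo a b, 0 < f' t) : f a < f b :=
  strictMonoOn_of_hasDerivWithinAt_pos (convex_Icc a b)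
    (continuous_of_forall_hasDerivAt hf).continuousOn (fun t _ => (hf t).hasDerivWithinAt)
    (by simpa only [interior_Icc] using hpos) (left_mem_Icc.2 hab.le) (right_mem_Icc.2 hab.le) hab

lemma lt_of_hasDerivAt_neg (hf : ∀ t, HasDerivAt f (f' t) t) (hab : a < b)
    (hneg : ∀ t ∈ Ioo a b, f' t < 0) : f b < f a :=
  neg_lt_neg_iff.1 <| lt_of_hasDerivAt_pos (f := -f) (fun t => (hf t).neg) hab fun t ht =>
    neg_pos.2 (hneg t ht)

lemma le_add_mul_sub_of_hasDerivAt_le (hf : ∀ t, HasDerivAt f (f' t) t) (hab : a ≤ b)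
    (hc : ∀ t ∈ Ioo a b, f' t ≤ c) : f b ≤ f a + c * (b - a) := by
  have := (convex_Icc a b).image_sub_le_mul_sub_of_deriv_le
    (continuous_of_forall_hasDerivAt hf).continuousOn
    (fun t _ => (hf t).differentiableAt.differentiableWithinAt)
    (fun t ht => by simpa only [(hf t).deriv] using hc t (interior_Icc (a := a) ▸ ht))
    a (left_mem_Icc.2 hab) b (right_mem_Icc.2 hab) hab
  linarith

lemma le_of_hasDerivAt_nonpos (hf : ∀ t, HasDerivAt f (f' t) t) (hab : a ≤ b)
    (hneg : ∀ t ∈ Ioo a b, f' t ≤ 0) : f b ≤ f a := by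
  simpa using le_add_mul_sub_of_hasDerivAt_le hf hab hneg

lemma le_of_hasDerivAt_nonneg (hf : ∀ t, HasDerivAt f (f' t) t) (hab : a ≤ b)
    (hpos : ∀ t ∈ Ioo a b, 0 ≤ f' t) : f a ≤ f b := by
  simpa using le_of_hasDerivAt_nonpos (fun t => (hf t).neg) hab
    fun t ht => neg_nonpos.2 (hpos t ht)

lemma tendsto_atBot_of_hasDerivAt_le (hf : ∀ t, HasDerivAt f (f' t) t) (hc : c < 0)
    (hle : ∀ᶠ t in atTop, f' t ≤ c) : Tendsto f atTop atBot := by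
  obtain ⟨s, hs⟩ := eventually_atTop.1 hle
  have hline : Tendsto (fun t => f s + c * (t - s)) atTop atBot :=
    tendsto_atBot_add_const_left _ _ <|
      (tendsto_atTop_add_const_right _ _ tendsto_id).const_mul_atTop_of_neg hc
  refine tendsto_atBot_mono' _ ?_ hline
  filter_upwards [eventually_ge_atTop s] with t ht
  exact le_add_mul_sub_of_hasDerivAt_le hf ht fun x hx => hs x hx.1.le

lemma tendsto_atBot_of_tendsto_deriv_atBot (hf : ∀ t, HasDerivAt f (f' t) t)
    (hf' : Tendsto f' atTop atBot) : Tendsto f atTop atBot :=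
  tendsto_atBot_of_hasDerivAt_le hf neg_one_lt_zero (hf'.eventually_le_atBot (-1))

lemma not_tendsto_deriv2_sub_mul_atBot_of_tendsto_nhds (hf : ∀ t, HasDerivAt f (f' t) t)
    (hf' : ∀ t, HasDerivAt f' (f'' t) t) (hl : Tendsto f atTop (𝓝 l)) (c : ℝ) :
    ¬ Tendsto (fun t => f'' t - c * f t) atTop atBot := by
  intro hbot
  have hf'' : Tendsto f'' atTop atBot := by
    simpa using hbot.atBot_add (hl.const_mul c)
  exact not_tendsto_atBot_of_tendsto_nhds hl
    (tendsto_atBot_of_tendsto_deriv_atBot hf (tendsto_atBot_of_tendsto_deriv_atBot hf' hf''))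

lemma exists_tendsto_of_antitoneOn_Ici (hf : AntitoneOn f (Ici a))
    (hbdd : BddBelow (f '' Ici a)) : ∃ l, Tendsto f atTop (𝓝 l) := by
  have hanti : Antitone fun t => f (max a t) := fun s t hst =>
    hf (le_max_left a s) (le_max_left a t) (max_le_max_left a hst)
  have hbdd' : BddBelow (range fun t => f (max a t)) :=
    hbdd.mono (range_subset_iff.2 fun t => mem_image_of_mem f (le_max_left a t))
  refine ⟨_, (tendsto_atTop_ciInf hanti hbdd').congr' ?_⟩
  filter_upwards [eventually_ge_atTop a] with t ht
  rw [max_eq_right ht]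

lemma exists_first_zero (hf : ContinuousOn f (Icc a b)) (hab : a ≤ b) (ha : 0 < f a)
    (hb : f b ≤ 0) : ∃ r ∈ Ioc a b, f r = 0 ∧ ∀ t ∈ Ico a r, 0 < f t := by
  have hcompact : IsCompact (Icc a b ∩ f ⁻¹' Iic 0) :=
    isCompact_Icc.of_isClosed_subset (hf.preimage_isClosed_of_isClosed isClosed_Icc isClosed_Iic)
      inter_subset_left
  obtain ⟨r, ⟨⟨har, hrb⟩, hr⟩, hmin⟩ :=
    hcompact.exists_isLeast ⟨b, right_mem_Icc.2 hab, hb⟩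
  have hpos (t : ℝ) (ht : t ∈ Ico a r) : 0 < f t := by
    by_contra hle
    exact ht.2.not_ge (hmin ⟨⟨ht.1, ht.2.le.trans hrb⟩, not_lt.1 hle⟩)
  obtain ⟨s, hs, hs₀⟩ := intermediate_value_Icc' har (hf.mono (Icc_subset_Icc_right hrb))
    ⟨hr, ha.le⟩
  obtain rfl : s = r := hs.2.antisymm (hmin ⟨⟨hs.1, hs.2.trans hrb⟩, hs₀.le⟩)
  exact ⟨s, ⟨har.lt_of_ne fun h => (h ▸ ha).ne' hs₀, hrb⟩, hs₀, hpos⟩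

lemma nonneg_of_mul_le_deriv (hf : ∀ t, HasDerivAt f (f' t) t)
    (hle : ∀ t ∈ Icc a b, k * f t ≤ f' t) (ha : 0 ≤ f a) : ∀ t ∈ Icc a b, 0 ≤ f t := by
  intro t ht
  have hexp (t : ℝ) : HasDerivAt (fun t => exp (-k * t)) (exp (-k * t) * -k) t := by
    simpa using ((hasDerivAt_id t).const_mul (-k)).exp
  have hmono : exp (-k * a) * f a ≤ exp (-k * t) * f t := by
    refine le_of_hasDerivAt_nonneg (fun t => (hexp t).mul (hf t)) ht.1 fun x hx => ?_
    have := mul_nonneg (exp_pos (-k * x)).le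
      (sub_nonneg.2 (hle x ⟨hx.1.le, hx.2.le.trans ht.2⟩))
    linarith
  exact nonneg_of_mul_nonneg_right ((mul_nonneg (exp_pos _).le ha).trans hmono) (exp_pos _)

-- Factor `D ^ 2 - k ^ 2 = (D - k) * (D + k)`.
lemma nonneg_of_sq_mul_le_deriv2 (hf : ∀ t, HasDerivAt f (f' t) t)
    (hf' : ∀ t, HasDerivAt f' (f'' t) t) (hk : 0 ≤ k)
    (hle : ∀ t ∈ Icc a b, k ^ 2 * f t ≤ f'' t) (ha : 0 ≤ f a) (ha' : 0 ≤ f' a) :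
    ∀ t ∈ Icc a b, 0 ≤ f t := by
  have hsum : ∀ t ∈ Icc a b, 0 ≤ f' t + k * f t :=
    nonneg_of_mul_le_deriv (k := k) (fun t => (hf' t).add ((hf t).const_mul k))
      (fun t ht => by simpa using by linarith [hle t ht]) (by simpa using by positivity)
  exact nonneg_of_mul_le_deriv (k := -k) hf (fun t ht => by linarith [hsum t ht]) ha

end Calculus

/-- A solution `v` of `v'''' = A v'' - h(v)` on the whole line, bundled with its derivatives
`v₁`, `v₂`, `v₃`. The equation `v'''' - A v'' + B v = g(v)` is the case `h x = B x - g x`. -/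
structure Orbit (A : ℝ) (h : ℝ → ℝ) where
  v : ℝ → ℝ
  v₁ : ℝ → ℝ
  v₂ : ℝ → ℝ
  v₃ : ℝ → ℝ
  hasDerivAt_v : ∀ t, HasDerivAt v (v₁ t) t
  hasDerivAt_v₁ : ∀ t, HasDerivAt v₁ (v₂ t) t
  hasDerivAt_v₂ : ∀ t, HasDerivAt v₂ (v₃ t) t
  hasDerivAt_v₃ : ∀ t, HasDerivAt v₃ (A * v₂ t - h (v t)) t

/-- The primitive of the force `h` which vanishes at `0`. -/
def potential (h : ℝ → ℝ) (x : ℝ) : ℝ :=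
  ∫ y in (0 : ℝ)..x, h y

section Potential

variable {h : ℝ → ℝ}

lemma potential_zero : potential h 0 = 0 :=
  intervalIntegral.integral_same

lemma hasDerivAt_potential (hh : Continuous h) (x : ℝ) : HasDerivAt (potential h) (h x) x :=
  (hh.integral_hasStrictDerivAt 0 x).hasDerivAt

end Potential

namespace Orbit

variable {A : ℝ} {h : ℝ → ℝ} (u : Orbit A h)

/-- The first integral of `v'''' = A v'' - h(v)`. -/
def energy (t : ℝ) : ℝ :=
  u.v₁ t * u.v₃ t - u.v₂ t ^ 2 / 2 - A * u.v₁ t ^ 2 / 2 + potential h (u.v t)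

/-- The initial data at time `0` of an even solution. -/
structure IsSymmetric : Prop where
  v₁_zero : u.v₁ 0 = 0
  v₃_zero : u.v₃ 0 = 0

/-- First way of missing the homoclinic: the orbit decreases until it becomes negative. -/
def CrossesZero : Prop :=
  ∃ T > 0, u.v T < 0 ∧ ∀ t ∈ Ioc 0 T, u.v₁ t < 0

/-- Second way of missing the homoclinic: the orbit stays positive until it increases. -/
def TurnsUp : Prop :=
  ∃ T > 0, 0 < u.v₁ T ∧ ∀ t ∈ Icc 0 T, 0 < u.v t

variable {u}

lemma continuous_v : Continuous u.v :=
  continuous_of_forall_hasDerivAt u.hasDerivAt_v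

lemma continuous_v₁ : Continuous u.v₁ :=
  continuous_of_forall_hasDerivAt u.hasDerivAt_v₁

lemma continuous_v₂ : Continuous u.v₂ :=
  continuous_of_forall_hasDerivAt u.hasDerivAt_v₂

lemma energy_eq_energy (hh : Continuous h) (s t : ℝ) : u.energy s = u.energy t := by
  have hderiv (t : ℝ) : HasDerivAt u.energy 0 t := by
    have hpot := (hasDerivAt_potential hh (u.v t)).comp t (u.hasDerivAt_v t)
    refine (((((u.hasDerivAt_v₁ t).mul (u.hasDerivAt_v₃ t)).sub
      (((u.hasDerivAt_v₂ t).pow 2).div_const 2)).sub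
      ((((u.hasDerivAt_v₁ t).pow 2).const_mul A).div_const 2)).add hpot).congr_deriv ?_
    push_cast
    ring
  exact is_const_of_deriv_eq_zero (fun t => (hderiv t).differentiableAt)
    (fun t => (hderiv t).deriv) s t

lemma v₂_sq_of_v₁_eq_zero {t : ℝ} (hE : u.energy t = 0) (ht : u.v₁ t = 0) :
    u.v₂ t ^ 2 = 2 * potential h (u.v t) := by
  rw [energy, ht] at hE
  linarith

lemma CrossesZero.not_turnsUp (hcross : u.CrossesZero) : ¬ u.TurnsUp := by
  rintro ⟨S, hS, hv₁, hpos⟩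
  obtain ⟨T, hT, hv, hneg⟩ := hcross
  rcases le_total T S with hTS | hST
  · exact hv.not_gt (hpos T ⟨hT.le, hTS⟩)
  · exact hv₁.not_gt (hneg S ⟨hS, hST⟩)

lemma crossesZero_of_eq_zero {s : ℝ} (hs : 0 < s) (hv : u.v s = 0)
    (hneg : ∀ t ∈ Ioc 0 s, u.v₁ t < 0) : u.CrossesZero := by
  obtain ⟨T', hsT', hT'⟩ := exists_Ico_subset_of_mem_nhds
    (continuous_v₁.continuousAt.eventually_lt_const (hneg s ⟨hs, le_rfl⟩)) (exists_gt s)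
  obtain ⟨T, hsT, hTT'⟩ := exists_between hsT'
  have hnegT (t : ℝ) (ht : t ∈ Ioc 0 T) : u.v₁ t < 0 := by
    rcases le_total t s with hts | hst
    · exact hneg t ⟨ht.1, hts⟩
    · exact hT' ⟨hst, ht.2.trans_lt hTT'⟩
  refine ⟨T, hs.trans hsT, ?_, hnegT⟩
  exact hv ▸ lt_of_hasDerivAt_neg u.hasDerivAt_v hsT
    fun t ht => hnegT t ⟨hs.trans ht.1, ht.2.le⟩

/-! ### The two ends of the shooting interval -/

lemma v₂_le_of_concave (hu : u.IsSymmetric) (hA : 0 ≤ A) {T : ℝ} (hT : 0 ≤ T)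
    (hh : ∀ x ∈ Icc 0 (u.v 0), 0 ≤ h x) (hv : ∀ t ∈ Ico 0 T, 0 ≤ u.v t)
    (hv₂ : ∀ t ∈ Ico 0 T, u.v₂ t ≤ 0) : u.v₂ T ≤ u.v₂ 0 := by
  have hv₁ (t : ℝ) (ht : t ∈ Ico 0 T) : u.v₁ t ≤ 0 :=
    (le_of_hasDerivAt_nonpos u.hasDerivAt_v₁ ht.1 fun x hx =>
      hv₂ x ⟨hx.1.le, hx.2.trans ht.2⟩).trans_eq hu.v₁_zero
  have hv_le (t : ℝ) (ht : t ∈ Ico 0 T) : u.v t ≤ u.v 0 :=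
    le_of_hasDerivAt_nonpos u.hasDerivAt_v ht.1 fun x hx => hv₁ x ⟨hx.1.le, hx.2.trans ht.2⟩
  have hv₃ (t : ℝ) (ht : t ∈ Ico 0 T) : u.v₃ t ≤ 0 := by
    refine (le_of_hasDerivAt_nonpos u.hasDerivAt_v₃ ht.1 fun x hx => ?_).trans_eq hu.v₃_zero
    have hxT : x ∈ Ico 0 T := ⟨hx.1.le, hx.2.trans ht.2⟩
    exact sub_nonpos.2 ((mul_nonpos_of_nonneg_of_nonpos hA (hv₂ x hxT)).trans
      (hh _ ⟨hv x hxT, hv_le x hxT⟩))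
  exact le_of_hasDerivAt_nonpos u.hasDerivAt_v₂ hT fun x hx => hv₃ x ⟨hx.1.le, hx.2⟩

lemma v₂_le_of_nonneg (hu : u.IsSymmetric) (hA : 0 ≤ A) (hv₂ : u.v₂ 0 < 0) {T : ℝ} (hT : 0 ≤ T)
    (hh : ∀ x ∈ Icc 0 (u.v 0), 0 ≤ h x) (hv : ∀ t ∈ Ico 0 T, 0 ≤ u.v t) :
    u.v₂ T ≤ u.v₂ 0 := by
  refine v₂_le_of_concave hu hA hT hh hv fun t ht => ?_
  by_contra! hpos
  obtain ⟨r, hr, hr₀, hneg⟩ := exists_first_zero (f := fun t => -u.v₂ t)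
    continuous_v₂.neg.continuousOn ht.1 (neg_pos.2 hv₂) (neg_nonpos.2 hpos.le)
  have := v₂_le_of_concave hu hA hr.1.le hh
    (fun x hx => hv x ⟨hx.1, hx.2.trans (hr.2.trans_lt ht.2)⟩)
    fun x hx => (neg_pos.1 (hneg x hx)).le
  linarith

lemma exists_nonpos_of_small (hu : u.IsSymmetric) (hA : 0 ≤ A) (hv₂ : u.v₂ 0 < 0)
    (hh : ∀ x ∈ Icc 0 (u.v 0), 0 ≤ h x) : ∃ s ≥ 0, u.v s ≤ 0 := by
  by_contra! hpos
  have hv₁ : Tendsto u.v₁ atTop atBot :=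
    tendsto_atBot_of_hasDerivAt_le u.hasDerivAt_v₁ hv₂ <| (eventually_ge_atTop 0).mono fun t ht =>
      v₂_le_of_nonneg hu hA hv₂ ht hh fun x hx => (hpos x hx.1).le
  have hv := tendsto_atBot_of_tendsto_deriv_atBot u.hasDerivAt_v hv₁
  obtain ⟨t, ht, ht₀⟩ := ((hv.eventually_le_atBot 0).and (eventually_ge_atTop 0)).exists
  exact (hpos t ht₀).not_ge ht

lemma crossesZero_of_small (hu : u.IsSymmetric) (hA : 0 ≤ A) (hv : 0 < u.v 0)
    (hv₂ : u.v₂ 0 < 0) (hh : ∀ x ∈ Icc 0 (u.v 0), 0 ≤ h x) : u.CrossesZero := by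
  obtain ⟨s, hs, hvs⟩ := exists_nonpos_of_small hu hA hv₂ hh
  obtain ⟨r, hr, hr₀, hpos⟩ := exists_first_zero continuous_v.continuousOn hs hv hvs
  refine crossesZero_of_eq_zero hr.1 hr₀ fun t ht => ?_
  have hle := le_add_mul_sub_of_hasDerivAt_le u.hasDerivAt_v₁ ht.1.le fun x hx =>
    v₂_le_of_nonneg hu hA hv₂ hx.1.le hh fun y hy =>
      (hpos y ⟨hy.1, hy.2.trans (hx.2.trans_le ht.2)⟩).le
  rw [hu.v₁_zero, zero_add, sub_zero] at hle
  exact hle.trans_lt (mul_neg_of_neg_of_pos hv₂ ht.1)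

lemma turnsUp_of_force_neg (hu : u.IsSymmetric) (hh : Continuous h) (hv : 0 < u.v 0)
    (hv₂ : u.v₂ 0 = 0) (hforce : h (u.v 0) < 0) : u.TurnsUp := by
  have hcont : Continuous fun t => A * u.v₂ t - h (u.v t) := by
    have := u.continuous_v
    have := u.continuous_v₂
    fun_prop
  have hev : ∀ᶠ t in 𝓝 (0 : ℝ), 0 < A * u.v₂ t - h (u.v t) :=
    hcont.continuousAt.eventually_const_lt (by simpa [hv₂] using hforce)
  obtain ⟨T, hT, hpos⟩ := exists_Ico_subset_of_mem_nhds hev (exists_gt 0)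
  have hv₃_pos (t : ℝ) (ht : t ∈ Ioo 0 T) : 0 < u.v₃ t :=
    hu.v₃_zero ▸ lt_of_hasDerivAt_pos u.hasDerivAt_v₃ ht.1
      fun x hx => hpos ⟨hx.1.le, hx.2.trans ht.2⟩
  have hv₂_pos (t : ℝ) (ht : t ∈ Ioo 0 T) : 0 < u.v₂ t :=
    hv₂ ▸ lt_of_hasDerivAt_pos u.hasDerivAt_v₂ ht.1 fun x hx => hv₃_pos x ⟨hx.1, hx.2.trans ht.2⟩
  have hv₁_pos (t : ℝ) (ht : t ∈ Ioo 0 T) : 0 < u.v₁ t :=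
    hu.v₁_zero ▸ lt_of_hasDerivAt_pos u.hasDerivAt_v₁ ht.1
      fun x hx => hv₂_pos x ⟨hx.1, hx.2.trans ht.2⟩
  obtain ⟨S, hS₀, hST⟩ := exists_between hT
  exact ⟨S, hS₀, hv₁_pos S ⟨hS₀, hST⟩, fun t ht =>
    hv.trans_le (le_of_hasDerivAt_nonneg u.hasDerivAt_v ht.1 fun x hx =>
      (hv₁_pos x ⟨hx.1, hx.2.trans_le (ht.2.trans hST.le)⟩).le)⟩

/-! ### Orbits which neither cross zero nor turn up -/

lemma v₁_nonpos_of_not_turnsUp (hturn : ¬ u.TurnsUp) {r t : ℝ}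
    (hpos : ∀ t ∈ Ico 0 r, 0 < u.v t) (ht : t ∈ Ioo 0 r) : u.v₁ t ≤ 0 :=
  not_lt.1 fun hv₁ => hturn ⟨t, ht.1, hv₁, fun x hx => hpos x ⟨hx.1, hx.2.trans_lt ht.2⟩⟩

lemma v_le_of_not_turnsUp (hturn : ¬ u.TurnsUp) {r t : ℝ}
    (hpos : ∀ t ∈ Ico 0 r, 0 < u.v t) (ht : t ∈ Icc 0 r) : u.v t ≤ u.v 0 :=
  le_of_hasDerivAt_nonpos u.hasDerivAt_v ht.1 fun _ hx =>
    v₁_nonpos_of_not_turnsUp hturn hpos ⟨hx.1, hx.2.trans_le ht.2⟩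

lemma v₁_neg_of_not_turnsUp (hturn : ¬ u.TurnsUp) (hE : ∀ t, u.energy t = 0)
    (hW : ∀ x ∈ Ioc 0 (u.v 0), 0 < potential h x) {r t : ℝ}
    (hpos : ∀ t ∈ Ico 0 r, 0 < u.v t) (ht : t ∈ Ioo 0 r) : u.v₁ t < 0 := by
  refine (v₁_nonpos_of_not_turnsUp hturn hpos ht).lt_of_ne fun hv₁ => ?_
  have hmax : IsLocalMax u.v₁ t := by
    filter_upwards [Ioo_mem_nhds ht.1 ht.2] with s hs
    exact (v₁_nonpos_of_not_turnsUp hturn hpos hs).trans_eq hv₁.symm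
  have hsq := v₂_sq_of_v₁_eq_zero (hE t) hv₁
  rw [hmax.hasDerivAt_eq_zero (u.hasDerivAt_v₁ t)] at hsq
  linarith [hW (u.v t) ⟨hpos t ⟨ht.1.le, ht.2⟩,
    v_le_of_not_turnsUp hturn hpos ⟨ht.1.le, ht.2.le⟩⟩]

lemma v₁_eq_zero_of_first_zero (hcross : ¬ u.CrossesZero) {r : ℝ} (hr : 0 < r)
    (hv : u.v r = 0) (hneg : ∀ t ∈ Ioo 0 r, u.v₁ t < 0) : u.v₁ r = 0 := by
  have hle : u.v₁ r ≤ 0 :=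
    le_on_closure (fun t ht => (hneg t ht).le) continuous_v₁.continuousOn continuousOn_const
      (by rw [closure_Ioo hr.ne]; exact ⟨hr.le, le_rfl⟩)
  refine hle.eq_of_not_lt fun hlt => hcross (crossesZero_of_eq_zero hr hv fun t ht => ?_)
  rcases ht.2.eq_or_lt with rfl | htr
  exacts [hlt, hneg t ⟨ht.1, htr⟩]

lemma v₃_nonpos_of_first_zero {r : ℝ} (hr : 0 < r) (hv₁ : u.v₁ r = 0) (hv₂ : u.v₂ r = 0)
    (hneg : ∀ t ∈ Ioo 0 r, u.v₁ t < 0) : u.v₃ r ≤ 0 := by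
  by_contra! hv₃
  have hderiv : deriv u.v₁ = u.v₂ := funext fun t => (u.hasDerivAt_v₁ t).deriv
  have hmin : IsLocalMin u.v₁ r :=
    isLocalMin_of_deriv_deriv_pos (by rwa [hderiv, (u.hasDerivAt_v₂ r).deriv]) (by rw [hderiv, hv₂])
      continuous_v₁.continuousAt
  obtain ⟨t, ht, htr⟩ := ((hmin.filter_mono nhdsWithin_le_nhds).and
    (Ioo_mem_nhdsLT hr)).exists
  exact (hneg t htr).not_ge (hv₁ ▸ ht)

-- With `w = v₂ - q v` the equation reads `w'' = p w + (p q v - h(v))`; compare backwards from `r`.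
lemma mul_v_le_v₂ {p q r : ℝ} (hp : 0 ≤ p) (hA : A = p + q)
    (hh : ∀ t ∈ Icc 0 r, h (u.v t) ≤ p * q * u.v t) (hr : q * u.v r ≤ u.v₂ r)
    (hr' : u.v₃ r ≤ q * u.v₁ r) : ∀ t ∈ Icc 0 r, q * u.v t ≤ u.v₂ t := by
  subst hA
  intro t ht
  have hw (t : ℝ) : HasDerivAt (fun t => u.v₂ (r - t) - q * u.v (r - t))
      (-(u.v₃ (r - t) - q * u.v₁ (r - t))) t :=
    (((u.hasDerivAt_v₂ (r - t)).sub ((u.hasDerivAt_v (r - t)).const_mul q)).comp_const_sub r t)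
  have hw' (t : ℝ) : HasDerivAt (fun t => -(u.v₃ (r - t) - q * u.v₁ (r - t)))
      ((p + q) * u.v₂ (r - t) - h (u.v (r - t)) - q * u.v₂ (r - t)) t :=
    (((u.hasDerivAt_v₃ (r - t)).sub ((u.hasDerivAt_v₁ (r - t)).const_mul q)).comp_const_sub
      r t).neg.congr_deriv (neg_neg _)
  have hnonneg := nonneg_of_sq_mul_le_deriv2 (a := 0) (b := r) hw hw' (sqrt_nonneg p)
    (fun s hs => ?_) (by simpa using hr) (by simpa using hr') (r - t)
    ⟨by linarith [ht.2], by linarith [ht.1]⟩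
  · rw [sub_sub_cancel] at hnonneg
    linarith
  · rw [sq_sqrt hp]
    linarith [hh (r - s) ⟨by linarith [hs.2], by linarith [hs.1]⟩]

lemma pos_of_not_crossesZero_of_not_turnsUp {p q : ℝ} (hp : 0 ≤ p) (hq : 0 < q)
    (hA : A = p + q) (hcross : ¬ u.CrossesZero) (hturn : ¬ u.TurnsUp)
    (hE : ∀ t, u.energy t = 0) (hW : ∀ x ∈ Ioc 0 (u.v 0), 0 < potential h x)
    (hh : ∀ x ∈ Icc 0 (u.v 0), h x ≤ p * q * x) (hv : 0 < u.v 0) (hv₂ : u.v₂ 0 ≤ 0) :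
    ∀ t ≥ 0, 0 < u.v t := by
  by_contra! ⟨s, hs, hvs⟩
  obtain ⟨r, hr, hr₀, hpos⟩ := exists_first_zero continuous_v.continuousOn hs hv hvs
  have hneg (t : ℝ) (ht : t ∈ Ioo 0 r) : u.v₁ t < 0 :=
    v₁_neg_of_not_turnsUp hturn hE hW hpos ht
  have hv₁r : u.v₁ r = 0 := v₁_eq_zero_of_first_zero hcross hr.1 hr₀ hneg
  have hv₂r : u.v₂ r = 0 := by
    simpa [hr₀, potential_zero] using v₂_sq_of_v₁_eq_zero (hE r) hv₁r
  have hv₃r : u.v₃ r ≤ 0 := v₃_nonpos_of_first_zero hr.1 hv₁r hv₂r hneg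
  have hrange (t : ℝ) (ht : t ∈ Icc 0 r) : u.v t ∈ Icc 0 (u.v 0) := by
    refine ⟨?_, v_le_of_not_turnsUp hturn hpos ht⟩
    rcases ht.2.eq_or_lt with rfl | htr
    exacts [hr₀.ge, (hpos t ⟨ht.1, htr⟩).le]
  have hconvex := mul_v_le_v₂ hp hA (fun t ht => hh _ (hrange t ht)) (by simp [hr₀, hv₂r])
    (by simpa [hv₁r] using hv₃r) 0 ⟨le_rfl, hr.1.le⟩
  exact (mul_pos hq hv).not_ge (hconvex.trans hv₂)

/-! ### Convergence to zero -/

lemma hasDerivAt_v₂_sub_mul_v (t : ℝ) :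
    HasDerivAt (fun t => u.v₂ t - A * u.v t) (u.v₃ t - A * u.v₁ t) t :=
  (u.hasDerivAt_v₂ t).sub ((u.hasDerivAt_v t).const_mul A)

lemma hasDerivAt_v₃_sub_mul_v₁ (t : ℝ) :
    HasDerivAt (fun t => u.v₃ t - A * u.v₁ t) (-h (u.v t)) t :=
  ((u.hasDerivAt_v₃ t).sub ((u.hasDerivAt_v₁ t).const_mul A)).congr_deriv (by ring)

lemma force_nonpos_of_tendsto (hh : Continuous h) {l : ℝ} (hl : Tendsto u.v atTop (𝓝 l)) :
    h l ≤ 0 := by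
  by_contra! hpos
  have hforce : Tendsto (fun t => -h (u.v t)) atTop (𝓝 (-h l)) :=
    ((hh.tendsto l).comp hl).neg
  have hfirst : Tendsto (fun t => u.v₃ t - A * u.v₁ t) atTop atBot :=
    tendsto_atBot_of_hasDerivAt_le hasDerivAt_v₃_sub_mul_v₁ (c := -(h l / 2)) (by linarith)
      (hforce.eventually_le_const (by linarith))
  exact not_tendsto_deriv2_sub_mul_atBot_of_tendsto_nhds u.hasDerivAt_v u.hasDerivAt_v₁ hl A
    (tendsto_atBot_of_tendsto_deriv_atBot hasDerivAt_v₂_sub_mul_v hfirst)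

lemma v₃_le_mul_v₁_of_force_nonpos {l : ℝ} (hl : Tendsto u.v atTop (𝓝 l))
    (hh : ∀ t ≥ 0, h (u.v t) ≤ 0) {s : ℝ} (hs : 0 ≤ s) : u.v₃ s - A * u.v₁ s ≤ 0 := by
  by_contra! hpos
  have hge (t : ℝ) (ht : s ≤ t) : u.v₃ s - A * u.v₁ s ≤ u.v₃ t - A * u.v₁ t :=
    le_of_hasDerivAt_nonneg hasDerivAt_v₃_sub_mul_v₁ ht fun x hx =>
      neg_nonneg.2 (hh x (hs.trans hx.1.le))
  have hbot : Tendsto (fun t => -(u.v₂ t - A * u.v t)) atTop atBot :=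
    tendsto_atBot_of_hasDerivAt_le (fun t => (hasDerivAt_v₂_sub_mul_v t).neg) (neg_neg_of_pos hpos)
      ((eventually_ge_atTop s).mono fun t ht => neg_le_neg (hge t ht))
  refine not_tendsto_deriv2_sub_mul_atBot_of_tendsto_nhds (fun t => (u.hasDerivAt_v t).neg)
    (fun t => (u.hasDerivAt_v₁ t).neg) hl.neg A (hbot.congr fun t => ?_)
  simp only [Pi.neg_apply]
  ring

lemma v₂_zero_nonneg_of_force_nonpos (hA : 0 ≤ A) {l : ℝ} (hl : Tendsto u.v atTop (𝓝 l))
    (hv : ∀ t ≥ 0, u.v t ≤ u.v 0) (hh : ∀ t ≥ 0, h (u.v t) ≤ 0) : 0 ≤ u.v₂ 0 := by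
  by_contra! hneg
  have hv₂ (t : ℝ) (ht : 0 ≤ t) : u.v₂ t ≤ u.v₂ 0 := by
    have := le_of_hasDerivAt_nonpos hasDerivAt_v₂_sub_mul_v ht fun x hx =>
      v₃_le_mul_v₁_of_force_nonpos hl hh hx.1.le
    linarith [mul_le_mul_of_nonneg_left (hv t ht) hA]
  exact not_tendsto_atBot_of_tendsto_nhds hl <|
    tendsto_atBot_of_tendsto_deriv_atBot u.hasDerivAt_v <|
      tendsto_atBot_of_hasDerivAt_le u.hasDerivAt_v₁ hneg ((eventually_ge_atTop 0).mono hv₂)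

lemma antitoneOn_of_not_turnsUp (hturn : ¬ u.TurnsUp) (hpos : ∀ t ≥ 0, 0 < u.v t) :
    AntitoneOn u.v (Ici 0) := fun _ hs _ _ hst =>
  le_of_hasDerivAt_nonpos u.hasDerivAt_v hst fun x hx =>
    v₁_nonpos_of_not_turnsUp hturn (r := x + 1) (fun t ht => hpos t ht.1)
      ⟨(mem_Ici.1 hs).trans_lt hx.1, lt_add_one x⟩

lemma tendsto_zero_of_antitoneOn (hA : 0 ≤ A) (hh : Continuous h) {τ : ℝ}
    (hforce_pos : ∀ x ∈ Ioo 0 τ, 0 < h x) (hforce_nonpos : ∀ x ∈ Icc τ (u.v 0), h x ≤ 0)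
    (hv₂ : u.v₂ 0 < 0) (hpos : ∀ t ≥ 0, 0 < u.v t) (hanti : AntitoneOn u.v (Ici 0)) :
    Tendsto u.v atTop (𝓝 0) := by
  obtain ⟨l, hl⟩ := exists_tendsto_of_antitoneOn_Ici hanti
    ⟨0, forall_mem_image.2 fun t ht => (hpos t ht).le⟩
  have hle (t : ℝ) (ht : 0 ≤ t) : u.v t ≤ u.v 0 := hanti self_mem_Ici ht ht
  have hge (t : ℝ) (ht : 0 ≤ t) : l ≤ u.v t :=
    le_of_tendsto hl ((eventually_ge_atTop t).mono fun s hs => hanti ht (ht.trans hs) hs)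
  have hl₀ : 0 ≤ l :=
    ge_of_tendsto hl ((eventually_ge_atTop 0).mono fun t ht => (hpos t ht).le)
  rcases hl₀.eq_or_lt with rfl | hl_pos
  · exact hl
  rcases lt_or_ge l τ with hlτ | hτl
  · exact absurd (force_nonpos_of_tendsto hh hl) (hforce_pos l ⟨hl_pos, hlτ⟩).not_ge
  · exact absurd (v₂_zero_nonneg_of_force_nonpos hA hl hle fun t ht =>
      hforce_nonpos _ ⟨hτl.trans (hge t ht), hle t ht⟩) hv₂.not_ge

/-! ### Openness of the two ways of missing the homoclinic -/

section Family

variable {X : Type*} [TopologicalSpace X] {u : X → Orbit A h}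

lemma isOpen_setOf_turnsUp (hv : Continuous fun p : X × ℝ => (u p.1).v p.2)
    (hv₁ : Continuous fun p : X × ℝ => (u p.1).v₁ p.2) : IsOpen {x | (u x).TurnsUp} := by
  refine isOpen_iff_eventually.2 fun x ⟨T, hT, hv₁T, hpos⟩ => ?_
  have hv₁T' : ∀ᶠ y in 𝓝 x, 0 < (u y).v₁ T :=
    (hv₁.comp (Continuous.prodMk_left T)).continuousAt.eventually_const_lt hv₁T
  have hpos' : ∀ᶠ y in 𝓝 x, ∀ t ∈ Icc 0 T, 0 < (u y).v t :=
    isCompact_Icc.eventually_forall_of_forall_eventually fun t ht =>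
      hv.continuousAt.eventually_const_lt (hpos t ht)
  filter_upwards [hv₁T', hpos'] with y hy hy' using ⟨T, hT, hy, hy'⟩

-- Near `t = 0`, where `v₁` vanishes, its negativity is inherited from that of `v₂`.
lemma isOpen_setOf_crossesZero (hv : Continuous fun p : X × ℝ => (u p.1).v p.2)
    (hv₁ : Continuous fun p : X × ℝ => (u p.1).v₁ p.2)
    (hv₂ : Continuous fun p : X × ℝ => (u p.1).v₂ p.2) (hv₁_zero : ∀ x, (u x).v₁ 0 = 0) :
    IsOpen {x | (u x).v₂ 0 < 0 ∧ (u x).CrossesZero} := by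
  refine isOpen_iff_eventually.2 fun x ⟨hconc, T, hT, hvT, hneg⟩ => ?_
  have hconc' : ∀ᶠ y in 𝓝 x, (u y).v₂ 0 < 0 :=
    (hv₂.comp (Continuous.prodMk_left 0)).continuousAt.eventually_lt_const hconc
  have hvT' : ∀ᶠ y in 𝓝 x, (u y).v T < 0 :=
    (hv.comp (Continuous.prodMk_left T)).continuousAt.eventually_lt_const hvT
  have hnear : ∀ᶠ p : X × ℝ in 𝓝 x ×ˢ 𝓝 0, (u p.1).v₂ p.2 < 0 := by
    rw [← nhds_prod_eq]
    exact hv₂.continuousAt.eventually_lt_const hconc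
  obtain ⟨near, hnear_x, near₀, hnear₀, hv₂_neg⟩ := eventually_prod_iff.1 hnear
  obtain ⟨δ, hδ, hδ_near⟩ := exists_Ico_subset_of_mem_nhds hnear₀ (exists_gt 0)
  have hfar : ∀ᶠ y in 𝓝 x, ∀ t ∈ Icc δ T, (u y).v₁ t < 0 :=
    isCompact_Icc.eventually_forall_of_forall_eventually fun t ht =>
      hv₁.continuousAt.eventually_lt_const (hneg t ⟨hδ.trans_le ht.1, ht.2⟩)
  filter_upwards [hconc', hvT', hnear_x, hfar] with y hy_conc hyT hy_near hy_far
  refine ⟨hy_conc, T, hT, hyT, fun t ht => ?_⟩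
  rcases le_total δ t with hδt | htδ
  · exact hy_far t ⟨hδt, ht.2⟩
  · exact hv₁_zero y ▸ lt_of_hasDerivAt_neg (u y).hasDerivAt_v₁ ht.1 fun s hs =>
      hv₂_neg hy_near (hδ_near ⟨hs.1.le, hs.2.trans_le htδ⟩)

lemma exists_not_crossesZero_not_turnsUp {S : Set X} (hS : IsPreconnected S)
    (hv : Continuous fun p : X × ℝ => (u p.1).v p.2)
    (hv₁ : Continuous fun p : X × ℝ => (u p.1).v₁ p.2)
    (hv₂ : Continuous fun p : X × ℝ => (u p.1).v₂ p.2) (hv₁_zero : ∀ x, (u x).v₁ 0 = 0)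
    (hconc : ∀ x ∈ S, (u x).v₂ 0 < 0) (hcross : ∃ x ∈ S, (u x).CrossesZero)
    (hturn : ∃ x ∈ S, (u x).TurnsUp) :
    ∃ x ∈ S, ¬ (u x).CrossesZero ∧ ¬ (u x).TurnsUp := by
  by_contra! hcover
  obtain ⟨x, -, hx, hx'⟩ := hS _ _ (isOpen_setOf_crossesZero hv hv₁ hv₂ hv₁_zero)
    (isOpen_setOf_turnsUp hv hv₁)
    (fun x hx => (em (u x).CrossesZero).imp (⟨hconc x hx, ·⟩) (hcover x hx))
    (hcross.imp fun x hx => ⟨hx.1, hconc x hx.1, hx.2⟩) hturn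
  exact hx.2.not_turnsUp hx'

end Family

/-! ### Orbits with prescribed initial data -/

/-- The first-order vector field on phase space whose integral curves are the states of orbits. -/
def vectorField (A : ℝ) (h : ℝ → ℝ) (x : ℝ × ℝ × ℝ × ℝ) : ℝ × ℝ × ℝ × ℝ :=
  (x.2.1, x.2.2.1, x.2.2.2, A * x.2.2.1 - h x.1)

/-- The phase-space point `(v, v', v'', v''')` of an orbit at a given time. -/
def state (u : Orbit A h) (t : ℝ) : ℝ × ℝ × ℝ × ℝ :=
  (u.v t, u.v₁ t, u.v₂ t, u.v₃ t)

/-- The orbit run backwards in time. -/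
def reverse (u : Orbit A h) : Orbit A h where
  v t := u.v (-t)
  v₁ t := -u.v₁ (-t)
  v₂ t := u.v₂ (-t)
  v₃ t := -u.v₃ (-t)
  hasDerivAt_v t := hasDerivAt_comp_neg u.hasDerivAt_v t
  hasDerivAt_v₁ t := (hasDerivAt_comp_neg u.hasDerivAt_v₁ t).neg.congr_deriv (neg_neg _)
  hasDerivAt_v₂ t := hasDerivAt_comp_neg u.hasDerivAt_v₂ t
  hasDerivAt_v₃ t := (hasDerivAt_comp_neg u.hasDerivAt_v₃ t).neg.congr_deriv (neg_neg _)

lemma lipschitzWith_vectorField (A : ℝ) {L : ℝ≥0} (hh : LipschitzWith L h) :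
    ∃ K, LipschitzWith K (vectorField A h) := by
  have h₁ : LipschitzWith 1 fun x : ℝ × ℝ × ℝ × ℝ => x.2 := LipschitzWith.prod_snd
  have h₂ : LipschitzWith 1 fun x : ℝ × ℝ × ℝ => x.2 := LipschitzWith.prod_snd
  have hv : LipschitzWith 1 fun x : ℝ × ℝ × ℝ × ℝ => x.1 := LipschitzWith.prod_fst
  have hv₁ := LipschitzWith.prod_fst.comp h₁
  have hv₂ := LipschitzWith.prod_fst.comp (h₂.comp h₁)
  have hv₃ := LipschitzWith.prod_snd.comp (h₂.comp h₁)
  exact ⟨_, hv₁.prodMk (hv₂.prodMk (hv₃.prodMk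
    (((lipschitzWith_smul A).comp hv₂).sub (hh.comp hv))))⟩

lemma hasDerivAt_state (u : Orbit A h) (t : ℝ) :
    HasDerivAt u.state (vectorField A h (u.state t)) t :=
  (u.hasDerivAt_v t).prodMk <| (u.hasDerivAt_v₁ t).prodMk <|
    (u.hasDerivAt_v₂ t).prodMk (u.hasDerivAt_v₃ t)

lemma state_eq_of_state_zero_eq {L : ℝ≥0} (hh : LipschitzWith L h) {u w : Orbit A h}
    (h₀ : u.state 0 = w.state 0) (t : ℝ) : u.state t = w.state t := by
  obtain ⟨K, hK⟩ := lipschitzWith_vectorField A hh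
  simpa [h₀] using dist_le_of_forall_hasDerivAt hK u.hasDerivAt_state w.hasDerivAt_state t

lemma IsSymmetric.v_neg {L : ℝ≥0} (hh : LipschitzWith L h) {u : Orbit A h} (hu : u.IsSymmetric)
    (t : ℝ) : u.v (-t) = u.v t :=
  congrArg Prod.fst <| state_eq_of_state_zero_eq (u := u.reverse) hh
    (by simp [state, reverse, hu.v₁_zero, hu.v₃_zero]) t

lemma exists_continuous_family (A : ℝ) {L : ℝ≥0} (hh : LipschitzWith L h) :
    ∃ u : ℝ × ℝ × ℝ × ℝ → Orbit A h, (∀ x, (u x).state 0 = x) ∧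
      Continuous fun p : (ℝ × ℝ × ℝ × ℝ) × ℝ => (u p.1).state p.2 := by
  obtain ⟨K, hK⟩ := lipschitzWith_vectorField A hh
  obtain ⟨X, hX₀, hX, hXc⟩ := exists_continuous_flow hK
  exact ⟨fun x => {
    v := fun t => (X x t).1
    v₁ := fun t => (X x t).2.1
    v₂ := fun t => (X x t).2.2.1
    v₃ := fun t => (X x t).2.2.2
    hasDerivAt_v := fun t => (hX x t).fst
    hasDerivAt_v₁ := fun t => (hX x t).snd.fst
    hasDerivAt_v₂ := fun t => (hX x t).snd.snd.fst
    hasDerivAt_v₃ := fun t => (hX x t).snd.snd.snd }, hX₀, hXc⟩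

lemma exists_continuous_family_energy_eq_zero (A : ℝ) {L : ℝ≥0} (hh : LipschitzWith L h) :
    ∃ u : ℝ → Orbit A h, (∀ a, (u a).state 0 = (a, 0, -√(2 * potential h a), 0)) ∧
      (∀ a, 0 ≤ potential h a → ∀ t, (u a).energy t = 0) ∧
      Continuous fun p : ℝ × ℝ => (u p.1).state p.2 := by
  obtain ⟨u, hu₀, hu⟩ := exists_continuous_family A hh
  have hpot : Continuous (potential h) :=
    continuous_of_forall_hasDerivAt (hasDerivAt_potential hh.continuous)
  refine ⟨fun a => u (a, 0, -√(2 * potential h a), 0), fun a => hu₀ _, fun a ha t => ?_,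
    hu.comp (f := fun p : ℝ × ℝ => ((p.1, 0, -√(2 * potential h p.1), 0), p.2)) (by fun_prop)⟩
  have h₀ := hu₀ (a, 0, -√(2 * potential h a), 0)
  simp only [state, Prod.mk.injEq] at h₀
  obtain ⟨hv, hv₁, hv₂, -⟩ := h₀
  rw [energy_eq_energy hh.continuous t 0, energy, hv, hv₁, hv₂, neg_sq, sq_sqrt (by positivity)]
  ring

end Orbit

/-- `h` is positive up to `τ`, then nonpositive up to `α`, where its potential returns to `0` for
the first time. An orbit of zero energy at rest at height `α` is pushed upwards, which stops the
shooting from above. -/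
structure IsBarrier (h : ℝ → ℝ) (τ α : ℝ) : Prop where
  zero_lt : 0 < τ
  lt : τ < α
  force_pos : ∀ x ∈ Ioo 0 τ, 0 < h x
  force_nonpos : ∀ x ∈ Icc τ α, h x ≤ 0
  force_neg : h α < 0
  potential_pos : ∀ x ∈ Ioo 0 α, 0 < potential h x
  potential_eq_zero : potential h α = 0

namespace IsBarrier

variable {h h' : ℝ → ℝ} {τ α : ℝ}

lemma force_nonneg (hb : IsBarrier h τ α) (hh : ContinuousOn h (Icc 0 τ)) :
    ∀ x ∈ Icc 0 τ, 0 ≤ h x := fun x hx =>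
  le_on_closure (s := Ioo 0 τ) (fun y hy => (hb.force_pos y hy).le) continuousOn_const
    (by rwa [closure_Ioo hb.zero_lt.ne]) (by rwa [closure_Ioo hb.zero_lt.ne])

lemma congr (hb : IsBarrier h τ α) (heq : EqOn h' h (Icc 0 α)) : IsBarrier h' τ α := by
  have hα := hb.zero_lt.trans hb.lt
  have hpot (x : ℝ) (hx : x ∈ Icc 0 α) : potential h' x = potential h x :=
    intervalIntegral.integral_congr fun y hy => by
      rw [uIcc_of_le hx.1] at hy
      exact heq ⟨hy.1, hy.2.trans hx.2⟩
  exact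
    { zero_lt := hb.zero_lt
      lt := hb.lt
      force_pos := fun x hx =>
        (hb.force_pos x hx).trans_eq (heq ⟨hx.1.le, (hx.2.trans hb.lt).le⟩).symm
      force_nonpos := fun x hx =>
        (heq ⟨hb.zero_lt.le.trans hx.1, hx.2⟩).trans_le (hb.force_nonpos x hx)
      force_neg := (heq ⟨hα.le, le_rfl⟩).trans_lt hb.force_neg
      potential_pos := fun x hx =>
        (hb.potential_pos x hx).trans_eq (hpot x ⟨hx.1.le, hx.2.le⟩).symm
      potential_eq_zero := (hpot α ⟨hα.le, le_rfl⟩).trans hb.potential_eq_zero }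

end IsBarrier

/-! ### Shooting -/

lemma exists_nonneg_pos_add_mul {A B : ℝ} (hA : 0 < A) (hB : 0 ≤ B) (hAB : 4 * B ≤ A ^ 2) :
    ∃ p q : ℝ, 0 ≤ p ∧ 0 < q ∧ A = p + q ∧ B = p * q := by
  have hsqrt : √(A ^ 2 - 4 * B) ≤ A := sqrt_le_left hA.le |>.2 (by linarith)
  have hsq : √(A ^ 2 - 4 * B) ^ 2 = A ^ 2 - 4 * B := sq_sqrt (by linarith)
  refine ⟨(A - √(A ^ 2 - 4 * B)) / 2, (A + √(A ^ 2 - 4 * B)) / 2, by linarith, by positivity,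
    by ring, by linear_combination hsq / 4⟩

namespace IsBarrier

variable {A B : ℝ} {h : ℝ → ℝ} {τ α : ℝ} {L : ℝ≥0}

lemma exists_orbit_not_crossesZero_not_turnsUp (hb : IsBarrier h τ α) (hA : 0 ≤ A)
    (hh : LipschitzWith L h) :
    ∃ u : Orbit A h, u.IsSymmetric ∧ u.v 0 ∈ Ioo 0 α ∧ u.v₂ 0 < 0 ∧ (∀ t, u.energy t = 0) ∧
      ¬ u.CrossesZero ∧ ¬ u.TurnsUp := by
  obtain ⟨u, hu₀, hE, hu⟩ := Orbit.exists_continuous_family_energy_eq_zero A hh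
  simp only [Orbit.state, Prod.mk.injEq] at hu₀ hu
  choose hv_zero hv₁_zero hv₂_zero hv₃_zero using hu₀
  have hα := hb.zero_lt.trans hb.lt
  have hsymm (a : ℝ) : (u a).IsSymmetric := ⟨hv₁_zero a, hv₃_zero a⟩
  have hconc (a : ℝ) (ha : a ∈ Ioo 0 α) : (u a).v₂ 0 < 0 := by
    rw [hv₂_zero, neg_lt_zero, sqrt_pos]
    exact mul_pos two_pos (hb.potential_pos a ha)
  have hcross : (u τ).CrossesZero :=
    Orbit.crossesZero_of_small (hsymm τ) hA (by simpa only [hv_zero] using hb.zero_lt)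
      (hconc τ ⟨hb.zero_lt, hb.lt⟩)
      (by simpa only [hv_zero] using hb.force_nonneg hh.continuous.continuousOn)
  have hturn : (u α).TurnsUp :=
    Orbit.turnsUp_of_force_neg (hsymm α) hh.continuous (by rwa [hv_zero])
      (by simp [hv₂_zero, hb.potential_eq_zero]) (by simpa only [hv_zero] using hb.force_neg)
  have hnear : ∀ᶠ a in 𝓝[<] α, (u a).TurnsUp :=
    nhdsWithin_le_nhds ((Orbit.isOpen_setOf_turnsUp hu.fst hu.snd.fst).mem_nhds hturn)
  obtain ⟨a, haturn, ha⟩ := (hnear.and (Ioo_mem_nhdsLT hα)).exists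
  obtain ⟨c, hc, hc_cross, hc_turn⟩ :=
    Orbit.exists_not_crossesZero_not_turnsUp isPreconnected_Ioo hu.fst hu.snd.fst hu.snd.snd.fst
      hv₁_zero hconc ⟨τ, ⟨hb.zero_lt, hb.lt⟩, hcross⟩ ⟨a, ha, haturn⟩
  exact ⟨u c, hsymm c, by rwa [hv_zero], hconc c hc, hE c (hb.potential_pos c hc).le, hc_cross,
    hc_turn⟩

lemma exists_homoclinic_orbit (hb : IsBarrier h τ α) (hA : 0 < A) (hAB : 4 * B ≤ A ^ 2)
    (hh : LipschitzWith L h) (hle : ∀ x ∈ Icc 0 α, h x ≤ B * x) :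
    ∃ u : Orbit A h, (∀ t, u.v t ∈ Ioo 0 α) ∧ (∀ t, u.v (-t) = u.v t) ∧
      AntitoneOn u.v (Ici 0) ∧ Tendsto u.v atTop (𝓝 0) := by
  obtain ⟨u, hu, hv, hv₂, hE, hcross, hturn⟩ :=
    hb.exists_orbit_not_crossesZero_not_turnsUp hA.le hh
  have hB : 0 ≤ B := by
    have hτ : τ ∈ Icc 0 α := ⟨hb.zero_lt.le, hb.lt.le⟩
    exact nonneg_of_mul_nonneg_left
      ((hb.force_nonneg hh.continuous.continuousOn τ ⟨hτ.1, le_rfl⟩).trans (hle τ hτ)) hb.zero_lt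
  obtain ⟨p, q, hp, hq, hApq, rfl⟩ := exists_nonneg_pos_add_mul hA hB hAB
  have hpos : ∀ t ≥ 0, 0 < u.v t :=
    Orbit.pos_of_not_crossesZero_of_not_turnsUp hp hq hApq hcross hturn hE
      (fun x hx => hb.potential_pos x ⟨hx.1, hx.2.trans_lt hv.2⟩)
      (fun x hx => hle x ⟨hx.1, hx.2.trans hv.2.le⟩) hv.1 hv₂.le
  have hanti := Orbit.antitoneOn_of_not_turnsUp hturn hpos
  have heven : ∀ t, u.v (-t) = u.v t := hu.v_neg hh
  refine ⟨u, fun t => ?_, heven, hanti, ?_⟩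
  · have habs : u.v |t| = u.v t := by
      rcases abs_choice t with ht | ht <;> simp only [ht, heven]
    rw [← habs]
    exact ⟨hpos _ (abs_nonneg t),
      (hanti self_mem_Ici (abs_nonneg t) (abs_nonneg t)).trans_lt hv.2⟩
  · exact Orbit.tendsto_zero_of_antitoneOn hA.le hh.continuous hb.force_pos
      (fun x hx => hb.force_nonpos x ⟨hx.1, hx.2.trans hv.2.le⟩) hv₂ hpos hanti

end IsBarrier

namespace Orbit

variable {A : ℝ} {h : ℝ → ℝ} (u : Orbit A h)

lemma deriv_v : deriv u.v = u.v₁ := funext fun t => (u.hasDerivAt_v t).deriv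

lemma deriv_v₁ : deriv u.v₁ = u.v₂ := funext fun t => (u.hasDerivAt_v₁ t).deriv

lemma deriv_v₂ : deriv u.v₂ = u.v₃ := funext fun t => (u.hasDerivAt_v₂ t).deriv

lemma deriv_v₃ : deriv u.v₃ = fun t => A * u.v₂ t - h (u.v t) :=
  funext fun t => (u.hasDerivAt_v₃ t).deriv

lemma iteratedDeriv_two_v : iteratedDeriv 2 u.v = u.v₂ := by
  simp only [iteratedDeriv_succ', iteratedDeriv_zero, deriv_v, deriv_v₁]

lemma iteratedDeriv_four_v : iteratedDeriv 4 u.v = fun t => A * u.v₂ t - h (u.v t) := by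
  simp only [iteratedDeriv_succ', iteratedDeriv_zero, deriv_v, deriv_v₁, deriv_v₂, deriv_v₃]

lemma contDiff_four_v (hh : Continuous h) : ContDiff ℝ 4 u.v := by
  have hcont : Continuous fun t => A * u.v₂ t - h (u.v t) := by
    have := u.continuous_v
    have := u.continuous_v₂
    fun_prop
  have h₃ : ContDiff ℝ 1 u.v₃ := contDiff_one_iff_deriv.2
    ⟨fun t => (u.hasDerivAt_v₃ t).differentiableAt, by rwa [deriv_v₃]⟩
  have h₂ : ContDiff ℝ (1 + 1) u.v₂ := contDiff_succ_iff_deriv.2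
    ⟨fun t => (u.hasDerivAt_v₂ t).differentiableAt, by simp, by rwa [deriv_v₂]⟩
  have h₁ : ContDiff ℝ (1 + 1 + 1) u.v₁ := contDiff_succ_iff_deriv.2
    ⟨fun t => (u.hasDerivAt_v₁ t).differentiableAt, by simp, by rwa [deriv_v₁]⟩
  have h₀ : ContDiff ℝ (1 + 1 + 1 + 1) u.v := contDiff_succ_iff_deriv.2
    ⟨fun t => (u.hasDerivAt_v t).differentiableAt, by simp, by rwa [deriv_v]⟩
  norm_num at h₀
  exact h₀

end Orbit

lemma exists_homoclinic_of_isBarrier {A B : ℝ} {h : ℝ → ℝ} {τ α : ℝ} {L : ℝ≥0} (hA : 0 < A)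
    (hAB : 4 * B ≤ A ^ 2) (hb : IsBarrier h τ α) (hh : LipschitzOnWith L h (Icc 0 α))
    (hle : ∀ x ∈ Icc 0 α, h x ≤ B * x) :
    ∃ v : ℝ → ℝ, ContDiff ℝ 4 v ∧ (∀ t, 0 < v t) ∧
      (∀ t, iteratedDeriv 4 v t = A * iteratedDeriv 2 v t - h (v t)) ∧
      Tendsto v atTop (𝓝 0) ∧ Tendsto v atBot (𝓝 0) ∧ (∀ t, v (-t) = v t) ∧
      AntitoneOn v (Ici 0) := by
  obtain ⟨k, hk, heq⟩ := hh.extend_real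
  obtain ⟨u, hrange, heven, hanti, hlim⟩ :=
    (hb.congr heq.symm).exists_homoclinic_orbit hA hAB hk fun x hx => heq hx ▸ hle x hx
  refine ⟨u.v, u.contDiff_four_v hk.continuous, fun t => (hrange t).1, fun t => ?_, hlim, ?_,
    heven, hanti⟩
  · rw [u.iteratedDeriv_four_v, u.iteratedDeriv_two_v, heq (Ioo_subset_Icc_self (hrange t))]
  · exact (hlim.comp tendsto_neg_atBot_atTop).congr heven

/-! ### Construction of a barrier -/

section Barrier

variable {h : ℝ → ℝ}

lemma mul_div_le_of_antitoneOn_div (hanti : AntitoneOn (fun x => h x / x) (Ioi 0)) {x y : ℝ}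
    (hx : 0 < x) (hxy : x ≤ y) : x * (h y / y) ≤ h x := by
  rw [← le_div_iff₀' hx]
  exact hanti hx (hx.trans_le hxy) hxy

lemma le_mul_div_of_antitoneOn_div (hanti : AntitoneOn (fun x => h x / x) (Ioi 0)) {x y : ℝ}
    (hx : 0 < x) (hxy : x ≤ y) : h y ≤ y * (h x / x) := by
  rw [← div_le_iff₀' (hx.trans_le hxy)]
  exact hanti hx (hx.trans_le hxy) hxy

lemma exists_sign_change_of_antitoneOn_div (hh : Continuous h)
    (hanti : AntitoneOn (fun x => h x / x) (Ioi 0)) (hpos : ∃ x > 0, 0 < h x)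
    (hneg : ∃ x > 0, h x < 0) :
    ∃ τ > 0, (∀ x ∈ Ioo 0 τ, 0 < h x) ∧ ∀ x ≥ τ, h x ≤ 0 := by
  obtain ⟨s, hs, hhs⟩ := hpos
  obtain ⟨t, ht, hht⟩ := hneg
  have hst : s ≤ t := by
    by_contra! hts
    exact hht.not_ge
      ((mul_pos ht (div_pos hhs hs)).le.trans (mul_div_le_of_antitoneOn_div hanti ht hts.le))
  obtain ⟨τ, hτ, hhτ, hpos⟩ := exists_first_zero hh.continuousOn hst hhs hht.le
  have hτ₀ : 0 < τ := hs.trans hτ.1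
  refine ⟨τ, hτ₀, fun x hx => ?_, fun x hx => ?_⟩
  · rcases le_total s x with hsx | hxs
    · exact hpos x ⟨hsx, hx.2⟩
    · exact (mul_pos hx.1 (div_pos hhs hs)).trans_le (mul_div_le_of_antitoneOn_div hanti hx.1 hxs)
  · simpa [hhτ] using le_mul_div_of_antitoneOn_div hanti hτ₀ hx

lemma tendsto_potential_atBot (hh : Continuous h)
    (hanti : AntitoneOn (fun x => h x / x) (Ioi 0)) (hneg : ∃ x > 0, h x < 0) :
    Tendsto (potential h) atTop atBot := by
  obtain ⟨t, ht, hht⟩ := hneg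
  refine tendsto_atBot_of_hasDerivAt_le (hasDerivAt_potential hh) hht ?_
  filter_upwards [eventually_ge_atTop t] with x hx
  calc h x ≤ x * (h t / t) := le_mul_div_of_antitoneOn_div hanti ht hx
    _ ≤ t * (h t / t) := mul_le_mul_of_nonpos_right hx (div_neg_of_neg_of_pos hht ht).le
    _ = h t := mul_div_cancel₀ _ ht.ne'

lemma exists_isBarrier (hh : Continuous h) (hanti : AntitoneOn (fun x => h x / x) (Ioi 0))
    (hpos : ∃ x > 0, 0 < h x) (hneg : ∃ x > 0, h x < 0) : ∃ τ α, IsBarrier h τ α := by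
  obtain ⟨τ, hτ, hpos, hnonpos⟩ := exists_sign_change_of_antitoneOn_div hh hanti hpos hneg
  have hpot := hasDerivAt_potential hh
  have hpot_pos (x : ℝ) (hx : x ∈ Ioc 0 τ) : 0 < potential h x :=
    potential_zero (h := h) ▸ lt_of_hasDerivAt_pos hpot hx.1
      fun y hy => hpos y ⟨hy.1, hy.2.trans_le hx.2⟩
  obtain ⟨R, hR, hτR⟩ := (((tendsto_potential_atBot hh hanti hneg).eventually_le_atBot 0).and
    (eventually_ge_atTop τ)).exists
  obtain ⟨α, hα, hpot_zero, hpot_pos'⟩ := exists_first_zero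
    (continuous_of_forall_hasDerivAt hpot).continuousOn hτR (hpot_pos τ ⟨hτ, le_rfl⟩) hR
  refine ⟨τ, α, hτ, hα.1, hpos, fun x hx => hnonpos x hx.1, ?_, fun x hx => ?_, hpot_zero⟩
  · by_contra! hforce
    have hle : potential h τ ≤ potential h α :=
      le_of_hasDerivAt_nonneg hpot hα.1.le fun x hx =>
        (mul_nonneg (hτ.trans hx.1).le (div_nonneg hforce (hτ.trans hα.1).le)).trans
          (mul_div_le_of_antitoneOn_div hanti (hτ.trans hx.1) hx.2.le)
    exact (hpot_pos τ ⟨hτ, le_rfl⟩).not_ge (hle.trans_eq hpot_zero)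
  · rcases le_total x τ with hxτ | hτx
    · exact hpot_pos x ⟨hx.1, hxτ⟩
    · exact hpot_pos' x ⟨hτx, hx.2⟩

end Barrier

theorem stmt_4_general {A B : ℝ} {g : ℝ → ℝ} (hA : 0 < A) (hAB : 4 * B ≤ A ^ 2)
    (hg : LocallyLipschitzOn (Ici 0) g) (hg_nonneg : ∀ t ≥ 0, 0 ≤ g t)
    (hratio : MonotoneOn (fun t => g t / t) (Ioi 0)) (hbelow : ∃ t > 0, g t / t < B)
    (habove : ∃ t > 0, B < g t / t) :
    ∃ v : ℝ → ℝ, ContDiff ℝ 4 v ∧ (∀ t, 0 < v t) ∧ IsSol A B g v ∧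
      Tendsto v atTop (𝓝 0) ∧ Tendsto v atBot (𝓝 0) ∧ (∀ t, v (-t) = v t) ∧
      AntitoneOn v (Ici 0) := by
  let h (x : ℝ) : ℝ := B * x - g (max x 0)
  have hh (x : ℝ) (hx : 0 ≤ x) : h x = B * x - g x := by simp only [h, max_eq_left hx]
  have hcont : Continuous h := by
    have := hg.continuousOn.comp_continuous (f := fun x : ℝ => max x 0) (by fun_prop)
      fun x => le_max_right x 0
    exact (continuous_const_mul B).sub this
  have hdiv : EqOn (fun x => B - g x / x) (fun x => h x / x) (Ioi 0) := fun x hx => by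
    simp only [hh x (le_of_lt hx), sub_div, mul_div_cancel_right₀ B (ne_of_gt hx)]
  obtain ⟨τ, α, hb⟩ := exists_isBarrier hcont
    (AntitoneOn.congr (fun x hx y hy hxy => sub_le_sub_left (hratio hx hy hxy) B) hdiv)
    (hbelow.imp fun x ⟨hx, hlt⟩ => ⟨hx, by rwa [hh x hx.le, sub_pos, ← div_lt_iff₀ hx]⟩)
    (habove.imp fun x ⟨hx, hlt⟩ => ⟨hx, by rwa [hh x hx.le, sub_neg, ← lt_div_iff₀ hx]⟩)
  obtain ⟨L, hL⟩ := (hg.mono Icc_subset_Ici_self).exists_lipschitzOnWith_of_compact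
    (isCompact_Icc (a := 0) (b := α))
  have hLip : LipschitzOnWith (‖B‖₊ + L) h (Icc 0 α) :=
    LipschitzOnWith.of_dist_le_mul fun x hx y hy => by
      rw [hh x hx.1, hh y hy.1]
      exact ((lipschitzWith_smul B).lipschitzOnWith.sub hL).dist_le_mul x hx y hy
  obtain ⟨v, hsmooth, hpos, hode, hlim⟩ := exists_homoclinic_of_isBarrier hA hAB hb hLip
    fun x hx => (hh x hx.1).trans_le (sub_le_self _ (hg_nonneg x hx.1))
  refine ⟨v, hsmooth, hpos, fun t => ?_, hlim⟩
  rw [hode, hh _ (hpos t).le]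
  ring

namespace CondG

variable {n : ℕ} {g : ℝ → ℝ}

lemma hasDerivAt (hg : CondG n g) {t : ℝ} (ht : 0 < t) : HasDerivAt g (deriv g t) t :=
  ((hg.1.contDiffAt (Ioi_mem_nhds ht)).differentiableAt one_ne_zero).hasDerivAt

lemma monotoneOn_div (hg : CondG n g) : MonotoneOn (fun t => g t / t) (Ioi 0) := by
  have hderiv (t : ℝ) (ht : 0 < t) :
      HasDerivAt (fun t => g t / t) ((deriv g t * t - g t * 1) / t ^ 2) t :=
    (hg.hasDerivAt ht).div (hasDerivAt_id t) ht.ne'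
  refine monotoneOn_of_deriv_nonneg (convex_Ioi 0)
    (fun t ht => (hderiv t ht).continuousAt.continuousWithinAt)
    (fun t ht => (hderiv t (interior_subset ht)).differentiableAt.differentiableWithinAt)
    fun t ht => ?_
  have ht₀ : 0 < t := interior_subset ht
  rw [(hderiv t ht₀).deriv, mul_one]
  exact div_nonneg (sub_nonneg.2 ((div_lt_iff₀ ht₀).1 (hg.2.2.2.1 t ht₀).1).le) (sq_nonneg t)

lemma continuousOn_Ici (hg : CondG n g) : ContinuousOn g (Ici 0) := by
  intro t ht
  rcases (mem_Ici.1 ht).eq_or_lt with rfl | ht₀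
  · refine continuousWithinAt_Ioi_iff_Ici.1 ?_
    rw [ContinuousWithinAt, hg.2.2.2.2.2.2]
    exact hg.2.2.1
  · exact (hg.hasDerivAt ht₀).continuousAt.continuousWithinAt

lemma exists_lipschitzOnWith_Icc (hg : CondG n g) {R : ℝ} (hR : 0 < R) :
    ∃ L, LipschitzOnWith L g (Icc 0 R) := by
  set p : ℝ := ((n : ℝ) + 4) / ((n : ℝ) - 4)
  have hdiv_pos (t : ℝ) (ht : 0 < t) : 0 < g t / t := div_pos (hg.2.1 t ht) ht
  have hderiv (t : ℝ) (ht : 0 < t) : g t / t < deriv g t ∧ deriv g t ≤ p * (g t / t) :=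
    hg.2.2.2.1 t ht
  have hp : 0 < p := pos_of_mul_pos_left
    ((hdiv_pos R hR).trans ((hderiv R hR).1.trans_le (hderiv R hR).2)) (hdiv_pos R hR).le
  have hbound (t : ℝ) (ht : t ∈ Ioo 0 R) : ‖deriv g t‖ ≤ p * (g R / R) := by
    rw [norm_of_nonneg ((hdiv_pos t ht.1).trans (hderiv t ht.1).1).le]
    exact (hderiv t ht.1).2.trans
      (mul_le_mul_of_nonneg_left (hg.monotoneOn_div ht.1 hR ht.2.le) hp.le)
  have hLip : LipschitzOnWith (p * (g R / R)).toNNReal g (Ioo 0 R) :=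
    (convex_Ioo 0 R).lipschitzOnWith_of_nnnorm_deriv_le
      (fun t ht => (hg.hasDerivAt ht.1).differentiableAt)
      fun t ht => NNReal.coe_le_coe.1 ((hbound t ht).trans (le_coe_toNNReal _))
  refine ⟨_, closure_Ioo hR.ne ▸ hLip.closure ?_⟩
  rw [closure_Ioo hR.ne]
  exact hg.continuousOn_Ici.mono Icc_subset_Ici_self

lemma locallyLipschitzOn (hg : CondG n g) : LocallyLipschitzOn (Ici 0) g := by
  intro t ht
  obtain ⟨L, hL⟩ := hg.exists_lipschitzOnWith_Icc (add_pos_of_nonneg_of_pos ht one_pos)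
  exact ⟨L, _, inter_mem_nhdsWithin _ (Iic_mem_nhds (lt_add_one t)), hL⟩

lemma nonneg (hg : CondG n g) : ∀ t ≥ 0, 0 ≤ g t := fun t ht => by
  rcases eq_or_lt_of_le ht with rfl | ht₀
  exacts [hg.2.2.2.2.2.2.ge, (hg.2.1 t ht₀).le]

lemma exists_div_lt (hg : CondG n g) :
    ∃ t > 0, g t / t < (n : ℝ) ^ 2 * ((n : ℝ) - 4) ^ 2 / 16 := by
  obtain ⟨-, -, -, hderiv, ⟨β, -, hβ, hlim⟩, -⟩ := hg
  obtain ⟨t, hlt, ht⟩ := ((hlim.eventually_lt_const hβ).and self_mem_nhdsWithin).exists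
  exact ⟨t, ht, (hderiv t ht).1.trans hlt⟩

lemma exists_lt_div (hg : CondG n g) (b : ℝ) : ∃ t > 0, b < g t / t := by
  obtain ⟨-, -, -, -, -, ⟨q, c, hq, hc, hgrowth⟩, -⟩ := hg
  have hlim : Tendsto (fun t : ℝ => c * t ^ (q - 1)) atTop atTop :=
    (tendsto_rpow_atTop (sub_pos.2 hq)).const_mul_atTop hc
  obtain ⟨t, hlt, ht⟩ := ((hlim.eventually_gt_atTop b).and (eventually_ge_atTop 1)).exists
  have ht₀ : 0 < t := one_pos.trans_le ht
  refine ⟨t, ht₀, hlt.trans_le ((le_div_iff₀ ht₀).2 ?_)⟩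
  rw [mul_assoc, ← rpow_add_one ht₀.ne', sub_add_cancel]
  exact hgrowth t ht

end CondG

theorem stmt_4 (n : ℕ) (hn : 5 ≤ n) (g : ℝ → ℝ) (hg : CondG n g)
    (A B : ℝ) (hA : A = ((n : ℝ) * ((n : ℝ) - 4) + 8) / 2)
    (hB : B = (n : ℝ) ^ 2 * ((n : ℝ) - 4) ^ 2 / 16) :
    ∃ v : ℝ → ℝ, ContDiff ℝ 4 v ∧ (∀ t, 0 < v t) ∧ IsSol A B g v ∧
      Filter.Tendsto v Filter.atTop (nhds 0) ∧ Filter.Tendsto v Filter.atBot (nhds 0) ∧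
      (∀ t, v (-t) = v t) ∧ AntitoneOn v (Set.Ici 0) := by
  have hA_pos : 0 < A := by rw [hA]; nlinarith [sq_nonneg ((n : ℝ) - 2)]
  have hAB : 4 * B ≤ A ^ 2 := by rw [hA, hB]; nlinarith [sq_nonneg ((n : ℝ) - 2)]
  exact stmt_4_general hA_pos hAB hg.locallyLipschitzOn hg.nonneg hg.monotoneOn_div
    (hB ▸ hg.exists_div_lt) (hg.exists_lt_div B)
end
end
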